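/- arXiv:1801.02182 — 2 statements merged into one kernel-verified Lean document; each statement's English description precedes it below -/
import Mathlib

section
/- ∫₀^∞ I₀(t)[K₀(t)]⁵ t⁵ dt = (π²/3)·∫₀^∞ I₀(t)K₀(t)·( [I₀(t)]²[K₀(t)]² − 1/(4t²) − 1/(16t⁴) )·t⁵ dt. -/
open Real MeasureTheory Set

/-- Modified Bessel function `I₀(t) = (1/π)∫₀^π exp(t cos θ) dθ`. -/
noncomputable def I0 (t : ℝ) : ℝ := (1 / π) * ∫ θ in (0:ℝ)..π, exp (t * cos θ)

/-- Modified Bessel function `K₀(t) = ∫₀^∞ exp(−t cosh u) du`. -/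
noncomputable def K0 (t : ℝ) : ℝ := ∫ u in Ioi (0:ℝ), exp (-(t * Real.cosh u))

/-- Rising factorial `(a)ₙ = a(a+1)⋯(a+n−1)`. -/
noncomputable def ris (a : ℝ) (n : ℕ) : ℝ := ∏ k ∈ Finset.range n, (a + k)

/-- Generalized hypergeometric series `ₚF_q(a; b | x)`. -/
noncomputable def pFq (a b : List ℝ) (x : ℝ) : ℝ :=
  ∑' n : ℕ, ((a.map fun p => ris p n).prod / (b.map fun q => ris q n).prod) * x ^ n
    / (n.factorial : ℝ)

/-!
On the positive real axis `W(t) = t K₀(t) (K₀(t) + iπ I₀(t))` is the boundary value of a function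
that is holomorphic in the upper half-plane, satisfies `W(-t) = -conj W(t)`, and has the expansion
`W(z) = i (π/2 + π/(16 z²)) + O(z⁻⁴)` at infinity. The expansion makes
`Q(z) = z² W(z)³ + π² W(z) (z²/4 + 1/16)` of order `z⁻²`, so `∫ Q = 0` along the real line by
Cauchy's theorem, and by the symmetry `∫₀^∞ Im Q = 0`. Separating real and imaginary parts of `W`
in `Im Q` gives the identity.

The continuation is obtained from `K₀(x) + i ∫₀^{π/2} exp(-x sin y) dy = ∫₀^∞ exp(ix sinh u) du`:
averaging over `x = 2t cosh v` produces `K₀(t)²` and `I₀(t) K₀(t)`, and `s = sinh u` turns the right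
side into the Fourier transform on a half-line of `(1 + s²)^{-1/2}`, whose expansion at infinity
comes from repeated integration by parts.
-/

open Filter Topology Asymptotics Bornology
open Complex (I)
open scoped ComplexConjugate

/-! ### Holomorphic functions given by integrals -/

section ParametricIntegral

variable {α : Type*} [MeasurableSpace α] {μ : Measure α}

theorem aestronglyMeasurable_deriv_of_eventually {𝕜 E : Type*} [NontriviallyNormedField 𝕜]
    [NormedAddCommGroup E] [NormedSpace 𝕜 E] {F : 𝕜 → α → E} {x : 𝕜}
    (hF_meas : ∀ᶠ y in 𝓝 x, AEStronglyMeasurable (F y) μ)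
    (hF_diff : ∀ᵐ a ∂μ, DifferentiableAt 𝕜 (F · a) x) :
    AEStronglyMeasurable (fun a => deriv (F · a) x) μ := by
  obtain ⟨y, hy⟩ := exists_seq_tendsto (𝓝[≠] x)
  obtain ⟨N, hN⟩ := ((hy.mono_right nhdsWithin_le_nhds).eventually hF_meas).exists_forall_of_atTop
  refine aestronglyMeasurable_of_tendsto_ae atTop (f := fun n a => slope (F · a) x (y (n + N)))
    (fun n => ?_) ?_
  · simp only [slope_def_module]
    exact ((hN (n + N) (Nat.le_add_left N n)).sub hF_meas.self_of_nhds).const_smul _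
  · filter_upwards [hF_diff] with a ha
    exact (hasDerivAt_iff_tendsto_slope.1 ha.hasDerivAt).comp
      (hy.comp (tendsto_add_atTop_nat N))

-- The Cauchy estimate turns a bound on `F` into the bound on `∂F/∂z` needed to differentiate
-- under the integral sign.
theorem differentiableOn_integral_of_norm_le {E : Type*} [NormedAddCommGroup E] [NormedSpace ℂ E]
    [CompleteSpace E] {F : ℂ → α → E} {bound : α → ℝ} {U : Set ℂ} (hU : IsOpen U)
    (hF_meas : ∀ z ∈ U, AEStronglyMeasurable (F z) μ)
    (hF_diff : ∀ᵐ a ∂μ, DifferentiableOn ℂ (F · a) U)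
    (hF_bound : ∀ᵐ a ∂μ, ∀ z ∈ U, ‖F z a‖ ≤ bound a) (hbound : Integrable bound μ) :
    DifferentiableOn ℂ (fun z => ∫ a, F z a ∂μ) U := by
  intro z hz
  obtain ⟨ε, hε, hball⟩ := Metric.isOpen_iff.1 hU z hz
  have hr : 0 < ε / 2 := half_pos hε
  have hclosedBall : ∀ y ∈ Metric.ball z (ε / 2), Metric.closedBall y (ε / 2) ⊆ U := fun y hy =>
    (Metric.closedBall_subset_ball' (by linarith [Metric.mem_ball.1 hy])).trans hball
  have hmeas_nhds : ∀ᶠ y in 𝓝 z, AEStronglyMeasurable (F y) μ := by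
    filter_upwards [hU.mem_nhds hz] with y hy using hF_meas y hy
  have hint : Integrable (F z) μ :=
    hbound.mono' (hF_meas z hz) (by filter_upwards [hF_bound] with a ha using ha z hz)
  have hderiv : ∀ᵐ a ∂μ, ∀ y ∈ Metric.ball z (ε / 2), HasDerivAt (F · a) (deriv (F · a) y) y := by
    filter_upwards [hF_diff] with a ha y hy
    have hyU : y ∈ U := hclosedBall y hy (Metric.mem_closedBall_self hr.le)
    exact (ha.differentiableAt (hU.mem_nhds hyU)).hasDerivAt
  have hderiv_meas : AEStronglyMeasurable (fun a => deriv (F · a) z) μ :=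
    aestronglyMeasurable_deriv_of_eventually hmeas_nhds (by
      filter_upwards [hderiv] with a ha using (ha z (Metric.mem_ball_self hr)).differentiableAt)
  have hderiv_bound : ∀ᵐ a ∂μ, ∀ y ∈ Metric.ball z (ε / 2),
      ‖deriv (F · a) y‖ ≤ bound a / (ε / 2) := by
    filter_upwards [hF_diff, hF_bound] with a hdiff hle y hy
    exact Complex.norm_deriv_le_of_forall_mem_sphere_norm_le hr
      ((hdiff.mono (hclosedBall y hy)).diffContOnCl_ball subset_rfl) fun w hw =>
        hle w (hclosedBall y hy (Metric.sphere_subset_closedBall hw))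
  have hasDeriv := (hasDerivAt_integral_of_dominated_loc_of_deriv_le (Metric.ball_mem_nhds z hr)
    hmeas_nhds hint hderiv_meas hderiv_bound (hbound.div_const _) hderiv).2
  exact hasDeriv.differentiableAt.differentiableWithinAt

end ParametricIntegral

/-! ### Contour integrals in the upper half-plane -/

section UpperHalfPlane

variable {F : ℂ → ℂ}

theorem eventually_norm_le_div_of_isLittleO_inv
    (hdecay : F =o[cobounded ℂ ⊓ 𝓟 {z | 0 ≤ z.im}] fun z => z⁻¹) {ε : ℝ} (hε : 0 < ε) :
    ∀ᶠ R : ℝ in atTop, ∀ z : ℂ, 0 ≤ z.im → R ≤ ‖z‖ → ‖F z‖ ≤ ε / R := by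
  have h := hdecay.bound hε
  rw [eventually_inf_principal, ← comap_norm_atTop, eventually_comap] at h
  obtain ⟨R₀, hR₀⟩ := eventually_atTop.1 h
  filter_upwards [eventually_ge_atTop R₀, eventually_gt_atTop 0] with R hR hRpos z hz hRz
  calc ‖F z‖ ≤ ε * ‖z⁻¹‖ := hR₀ ‖z‖ (hR.trans hRz) z rfl hz
    _ ≤ ε / R := by rw [norm_inv, ← div_eq_mul_inv]; gcongr

theorem integral_boundary_rect_upper_eq (hcont : ContinuousOn F {z | 0 ≤ z.im})
    (hdiff : DifferentiableOn ℂ F {z | 0 < z.im}) (a b : ℝ) {h : ℝ} (hh : 0 ≤ h) :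
    ∫ x in a..b, F x = (∫ x in a..b, F (x + h * I)) - I * (∫ y in 0..h, F (b + y * I))
      + I * ∫ y in 0..h, F (a + y * I) := by
  have hrect := Complex.integral_boundary_rect_eq_zero_of_continuousOn_of_differentiableOn F
    (a : ℂ) (b + h * I)
    (hcont.mono fun z hz => by
      have := hz.2
      simp only [Complex.ofReal_im, Complex.add_im, Complex.mul_im, Complex.ofReal_re,
        Complex.I_im, Complex.I_re, mul_one, mul_zero, add_zero, zero_add, uIcc_of_le hh] at this
      exact this.1)
    (hdiff.mono fun z hz => by
      have := hz.2
      simp only [Complex.ofReal_im, Complex.add_im, Complex.mul_im, Complex.ofReal_re,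
        Complex.I_im, Complex.I_re, mul_one, mul_zero, add_zero, zero_add, min_eq_left hh] at this
      exact this.1)
  simp only [Complex.ofReal_re, Complex.ofReal_im, Complex.add_re, Complex.add_im, Complex.mul_re,
    Complex.mul_im, Complex.I_re, Complex.I_im, mul_zero, mul_one, zero_mul, sub_zero, add_zero,
    zero_add, Complex.ofReal_zero, smul_eq_mul] at hrect
  linear_combination hrect

theorem tendsto_integral_symm_of_isLittleO_inv (hcont : ContinuousOn F {z | 0 ≤ z.im})
    (hdiff : DifferentiableOn ℂ F {z | 0 < z.im})
    (hdecay : F =o[cobounded ℂ ⊓ 𝓟 {z | 0 ≤ z.im}] fun z => z⁻¹) :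
    Tendsto (fun R : ℝ => ∫ x in (-R)..R, F x) atTop (𝓝 0) := by
  refine Metric.tendsto_nhds.2 fun ε hε => ?_
  filter_upwards [eventually_norm_le_div_of_isLittleO_inv hdecay (by positivity : 0 < ε / 5),
    eventually_gt_atTop 0] with R hF hR
  have htop : ‖∫ x in (-R)..R, F (x + R * I)‖ ≤ ε / 5 / R * |R - (-R)| := by
    refine intervalIntegral.norm_integral_le_of_norm_le_const fun x _ => hF _ (by simp [hR.le]) ?_
    simpa [abs_of_pos hR] using Complex.abs_im_le_norm (x + R * I)
  have hside (s : ℝ) (hs : |s| = R) : ‖∫ y in 0..R, F (s + y * I)‖ ≤ ε / 5 / R * |R - 0| := by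
    refine intervalIntegral.norm_integral_le_of_norm_le_const fun y hy => hF _ ?_ ?_
    · simpa using (uIoc_of_le hR.le ▸ hy).1.le
    · simpa [hs] using Complex.abs_re_le_norm (s + y * I)
  have hright := hside R (abs_of_pos hR)
  have hleft := hside (-R) (by rw [abs_neg, abs_of_pos hR])
  rw [dist_zero_right, integral_boundary_rect_upper_eq hcont hdiff (-R) R hR.le]
  calc _ ≤ ‖∫ x in (-R)..R, F (x + R * I)‖ + ‖∫ y in 0..R, F (R + y * I)‖
        + ‖∫ y in 0..R, F ((-R : ℝ) + y * I)‖ := by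
        refine (norm_add_le _ _).trans (add_le_add ((norm_sub_le _ _).trans ?_) ?_) <;> simp
    _ ≤ ε / 5 / R * |R - (-R)| + ε / 5 / R * |R - 0| + ε / 5 / R * |R - 0| := by gcongr
    _ = 4 / 5 * ε := by
        rw [abs_of_pos (by linarith), abs_of_pos (by linarith)]
        field_simp
        ring
    _ < ε := by linarith

theorem tendsto_ofReal_cocompact_upper :
    Tendsto ((↑) : ℝ → ℂ) (cocompact ℝ) (cobounded ℂ ⊓ 𝓟 {z | 0 ≤ z.im}) := by
  refine tendsto_inf.2 ⟨?_, tendsto_principal.2 (by simp)⟩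
  rw [← Metric.cobounded_eq_cocompact]
  exact RCLike.tendsto_ofReal_cobounded_cobounded ℂ

theorem integrable_of_continuous_of_isBigO_sq_inv {E : Type*} [NormedAddCommGroup E]
    {f : ℝ → E} (hf : Continuous f) (hdecay : f =O[cocompact ℝ] fun t => (t ^ 2)⁻¹) :
    Integrable f := by
  have hcomp : (fun t : ℝ => (t ^ 2)⁻¹) =O[cocompact ℝ] fun t => (1 + t ^ 2)⁻¹ := by
    refine IsBigO.of_bound 2 ?_
    have hlarge : ∀ᶠ t : ℝ in cocompact ℝ, 1 ≤ ‖t‖ :=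
      tendsto_norm_cocompact_atTop.eventually_ge_atTop 1
    filter_upwards [hlarge] with t ht
    have ht2 : 1 ≤ t ^ 2 := by simpa [one_le_sq_iff_one_le_abs] using ht
    rw [norm_of_nonneg (by positivity), norm_of_nonneg (by positivity), ← div_eq_mul_inv,
      inv_le_comm₀ (by positivity) (by positivity), inv_div]
    linarith
  exact hf.locallyIntegrable.integrable_of_isBigO_cocompact (hdecay.trans hcomp)
    (integrable_inv_one_add_sq.integrableAtFilter _)

theorem integral_Ioi_im_eq_zero_of_isLittleO_inv (hcont : ContinuousOn F {z | 0 ≤ z.im})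
    (hdiff : DifferentiableOn ℂ F {z | 0 < z.im})
    (hdecay : F =o[cobounded ℂ ⊓ 𝓟 {z | 0 ≤ z.im}] fun z => z⁻¹)
    (hint : Integrable fun t : ℝ => F t) (hsymm : ∀ t : ℝ, F (-t : ℝ) = -conj (F t)) :
    ∫ t in Ioi (0 : ℝ), (F t).im = 0 := by
  have hzero : ∫ t : ℝ, F t = 0 := tendsto_nhds_unique
    (intervalIntegral_tendsto_integral hint tendsto_neg_atTop_atBot tendsto_id)
    (tendsto_integral_symm_of_isLittleO_inv hcont hdiff hdecay)
  have heven (t : ℝ) : (F (|t| : ℝ)).im = (F t).im := by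
    rcases abs_choice t with h | h
    · rw [h]
    · rw [h, hsymm, Complex.neg_im, Complex.conj_im, neg_neg]
  have habs := integral_comp_abs (f := fun t => (F t).im)
  simp only [heven] at habs
  have him : ∫ t : ℝ, (F t).im = (∫ t : ℝ, F t).im := integral_im hint
  rw [him, hzero, Complex.zero_im] at habs
  linarith

end UpperHalfPlane

/-! ### The Fourier transform of a half-line -/

/-- The one-sided Fourier transform `∫₀^∞ exp(izw) f(w) dw`. For `f` integrable on `(0, ∞)` the
integral converges for `z` in the closed upper half-plane. -/
noncomputable def halfLineFourier (f : ℝ → ℝ) (z : ℂ) : ℂ :=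
  ∫ w in Ioi (0 : ℝ), Complex.exp (I * z * w) * f w

namespace halfLineFourier

variable {f f' : ℝ → ℝ} {z : ℂ}

theorem norm_exp_mul_le (f : ℝ → ℝ) (hz : 0 ≤ z.im) {w : ℝ} (hw : w ∈ Ioi 0) :
    ‖Complex.exp (I * z * w) * f w‖ ≤ ‖f w‖ := by
  have hexp : ‖Complex.exp (I * z * w)‖ ≤ 1 := by
    simpa [Complex.norm_exp] using mul_nonneg hz (le_of_lt hw)
  simpa using mul_le_of_le_one_left (norm_nonneg (f w : ℂ)) hexp

theorem aestronglyMeasurable_exp_mul (hf : IntegrableOn f (Ioi 0)) (z : ℂ) :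
    AEStronglyMeasurable (fun w : ℝ => Complex.exp (I * z * w) * f w)
      (volume.restrict (Ioi 0)) :=
  (Continuous.aestronglyMeasurable (by fun_prop)).mul
    (Complex.continuous_ofReal.comp_aestronglyMeasurable hf.1)

theorem integrableOn_exp_mul (hf : IntegrableOn f (Ioi 0)) (hz : 0 ≤ z.im) :
    IntegrableOn (fun w : ℝ => Complex.exp (I * z * w) * f w) (Ioi 0) :=
  hf.norm.mono' (aestronglyMeasurable_exp_mul hf z)
    ((ae_restrict_mem measurableSet_Ioi).mono fun _ hw => norm_exp_mul_le f hz hw)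

theorem norm_le (hf : IntegrableOn f (Ioi 0)) (hz : 0 ≤ z.im) :
    ‖halfLineFourier f z‖ ≤ ∫ w in Ioi (0 : ℝ), ‖f w‖ :=
  norm_integral_le_of_norm_le hf.norm
    ((ae_restrict_mem measurableSet_Ioi).mono fun _ hw => norm_exp_mul_le f hz hw)

theorem continuousOn (hf : IntegrableOn f (Ioi 0)) :
    ContinuousOn (halfLineFourier f) {z | 0 ≤ z.im} :=
  continuousOn_of_dominated (fun z _ => aestronglyMeasurable_exp_mul hf z)
    (fun _ hz => (ae_restrict_mem measurableSet_Ioi).mono fun _ hw => norm_exp_mul_le f hz hw)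
    hf.norm (ae_of_all _ fun _ => by fun_prop)

theorem differentiableOn (hf : IntegrableOn f (Ioi 0)) :
    DifferentiableOn ℂ (halfLineFourier f) {z | 0 < z.im} :=
  differentiableOn_integral_of_norm_le (isOpen_lt continuous_const Complex.continuous_im)
    (fun z _ => aestronglyMeasurable_exp_mul hf z) (ae_of_all _ fun _ => by fun_prop)
    ((ae_restrict_mem measurableSet_Ioi).mono fun _ hw _ hz => norm_exp_mul_le f (le_of_lt hz) hw)
    hf.norm

theorem neg_ofReal (f : ℝ → ℝ) (t : ℝ) :
    halfLineFourier f (-t : ℝ) = conj (halfLineFourier f t) := by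
  unfold halfLineFourier
  rw [← integral_conj]
  simp [← Complex.exp_conj]

theorem hasDerivAt_exp_mul (z : ℂ) {w d : ℝ} (hderiv : HasDerivAt f d w) :
    HasDerivAt (fun w : ℝ => Complex.exp (I * z * w) * f w)
      (I * z * (Complex.exp (I * z * w) * f w) + Complex.exp (I * z * w) * d) w := by
  have hlin : HasDerivAt (fun w : ℝ => I * z * w) (I * z) w := by
    simpa using (Complex.ofRealCLM.hasDerivAt (x := w)).const_mul (I * z)
  exact (hlin.cexp.mul hderiv.ofReal_comp).congr_deriv (by ring)

theorem eq_div_mul_add (hderiv : ∀ w, HasDerivAt f (f' w) w) (hf : IntegrableOn f (Ioi 0))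
    (hf' : IntegrableOn f' (Ioi 0)) (hz : 0 ≤ z.im) (hz0 : z ≠ 0) :
    halfLineFourier f z = I / z * (f 0 + halfLineFourier f' z) := by
  have hprod (w : ℝ) := hasDerivAt_exp_mul z (hderiv w)
  have hint := (integrableOn_exp_mul hf hz).const_mul (I * z)
  have hint' := integrableOn_exp_mul hf' hz
  have hzero := tendsto_zero_of_hasDerivAt_of_integrableOn_Ioi (fun w _ => hprod w)
    (hint.add hint') (integrableOn_exp_mul hf hz)
  have hftc := integral_Ioi_of_hasDerivAt_of_tendsto' (fun w _ => hprod w) (hint.add hint') hzero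
  rw [integral_add hint hint', integral_const_mul] at hftc
  simp only [Complex.ofReal_zero, mul_zero, Complex.exp_zero, one_mul] at hftc
  change I * z * halfLineFourier f z + halfLineFourier f' z = 0 - f 0 at hftc
  field_simp
  linear_combination -I * hftc + z * halfLineFourier f z * Complex.I_sq

theorem tendsto_mul_intervalIntegral (hderiv : ∀ w, HasDerivAt f (f' w) w)
    (hf' : IntegrableOn f' (Ioi 0)) (hlim : Tendsto f atTop (𝓝 0)) (hz : 0 ≤ z.im) :
    Tendsto (fun R : ℝ => z * ∫ w in 0..R, Complex.exp (I * z * w) * f w) atTop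
      (𝓝 (I * (f 0 + halfLineFourier f' z))) := by
  have hcont : Continuous fun w : ℝ => I * z * (Complex.exp (I * z * w) * f w) := by
    have hf : Continuous f := continuous_iff_continuousAt.2 fun w => (hderiv w).continuousAt
    fun_prop
  have hint' := integrableOn_exp_mul hf' hz
  have hboundary : Tendsto (fun R : ℝ => Complex.exp (I * z * R) * f R) atTop (𝓝 0) := by
    refine squeeze_zero_norm' ?_ (tendsto_zero_iff_norm_tendsto_zero.1 hlim)
    filter_upwards [eventually_gt_atTop 0] with R hR using norm_exp_mul_le f hz hR
  have htail := intervalIntegral_tendsto_integral_Ioi 0 hint' tendsto_id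
  have hsum := ((hboundary.const_sub (f 0 : ℂ)).add htail).const_mul I
  rw [sub_zero] at hsum
  refine hsum.congr' ?_
  filter_upwards [eventually_ge_atTop 0] with R hR
  have hintR : IntervalIntegrable (fun w : ℝ => Complex.exp (I * z * w) * f' w) volume 0 R :=
    (intervalIntegrable_iff_integrableOn_Ioc_of_le hR).2 (hint'.mono_set Ioc_subset_Ioi_self)
  have hftc := intervalIntegral.integral_eq_sub_of_hasDerivAt
    (fun w _ => hasDerivAt_exp_mul z (hderiv w)) ((hcont.intervalIntegrable 0 R).add hintR)
  rw [intervalIntegral.integral_add (hcont.intervalIntegrable 0 R) hintR,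
    intervalIntegral.integral_const_mul] at hftc
  simp only [Complex.ofReal_zero, mul_zero, Complex.exp_zero, one_mul] at hftc
  simp only [id_eq]
  linear_combination I * hftc - (z * ∫ w in 0..R, Complex.exp (I * z * w) * f w) * Complex.I_sq

theorem eq_sum_add {g : ℕ → ℝ → ℝ} (hderiv : ∀ k w, HasDerivAt (g k) (g (k + 1) w) w)
    (hg : ∀ k, IntegrableOn (g k) (Ioi 0)) (hz : 0 ≤ z.im) (hz0 : z ≠ 0) (n : ℕ) :
    halfLineFourier (g 0) z = (∑ j ∈ Finset.range n, (I / z) ^ (j + 1) * g j 0)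
      + (I / z) ^ n * halfLineFourier (g n) z := by
  induction n with
  | zero => simp
  | succ n ih =>
    rw [ih, Finset.sum_range_succ, eq_div_mul_add (hderiv n) (hg n) (hg (n + 1)) hz hz0]
    ring

end halfLineFourier

/-! ### Derivatives of `(1 + w²)^(-1/2)` -/

/-- The function `(1 + w²)^(-1/2)`, which is the density `du/dw` of the substitution
`w = sinh u`. -/
noncomputable def invSqrtOneAddSq (w : ℝ) : ℝ := (√(1 + w ^ 2))⁻¹

namespace invSqrtOneAddSq

open Polynomial

theorem pos (w : ℝ) : 0 < invSqrtOneAddSq w := by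
  unfold invSqrtOneAddSq; positivity

theorem sq_eq (w : ℝ) : invSqrtOneAddSq w ^ 2 = (1 + w ^ 2)⁻¹ := by
  rw [invSqrtOneAddSq, inv_pow, Real.sq_sqrt (by positivity)]

theorem le_one (w : ℝ) : invSqrtOneAddSq w ≤ 1 :=
  inv_le_one_of_one_le₀ (Real.one_le_sqrt.2 (by nlinarith))

theorem apply_zero : invSqrtOneAddSq 0 = 1 := by simp [invSqrtOneAddSq]

theorem apply_sinh (u : ℝ) : invSqrtOneAddSq (Real.sinh u) = (Real.cosh u)⁻¹ := by
  rw [invSqrtOneAddSq, add_comm, ← Real.cosh_sq, Real.sqrt_sq (Real.cosh_pos u).le]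

theorem abs_mul_le_one (w : ℝ) : |w * invSqrtOneAddSq w| ≤ 1 := by
  rw [← sq_le_one_iff_abs_le_one, mul_pow, sq_eq, ← div_eq_mul_inv, div_le_one (by positivity)]
  linarith

theorem tendsto_atTop : Tendsto invSqrtOneAddSq atTop (𝓝 0) := by
  refine squeeze_zero' (.of_forall fun w => (pos w).le) ?_ tendsto_inv_atTop_zero
  filter_upwards [eventually_gt_atTop 0] with w hw
  rw [← one_div, le_div_iff₀' hw]
  exact (le_abs_self _).trans (abs_mul_le_one w)

theorem hasDerivAt (w : ℝ) : HasDerivAt invSqrtOneAddSq (-(w * invSqrtOneAddSq w ^ 3)) w := by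
  have hsq : HasDerivAt (fun x : ℝ => 1 + x ^ 2) (2 * w) w := by
    simpa using (hasDerivAt_pow 2 w).const_add 1
  refine ((hsq.sqrt (by positivity)).inv (by positivity)).congr_deriv ?_
  have : 0 < √(1 + w ^ 2) := by positivity
  unfold invSqrtOneAddSq
  field_simp

theorem continuous : Continuous invSqrtOneAddSq :=
  continuous_iff_continuousAt.2 fun w => (hasDerivAt w).continuousAt

theorem integrable_pow_mul_pow {a b : ℕ} (hab : a + 2 ≤ b) :
    Integrable fun w : ℝ => w ^ a * invSqrtOneAddSq w ^ b := by
  obtain ⟨c, rfl⟩ := Nat.exists_eq_add_of_le hab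
  refine integrable_inv_one_add_sq.mono'
    ((continuous_id.pow a).mul (continuous.pow _)).aestronglyMeasurable (ae_of_all _ fun w => ?_)
  calc ‖w ^ a * invSqrtOneAddSq w ^ (a + 2 + c)‖
      = |w * invSqrtOneAddSq w| ^ a * invSqrtOneAddSq w ^ c * invSqrtOneAddSq w ^ 2 := by
        rw [norm_mul, norm_pow, norm_pow, norm_eq_abs, norm_of_nonneg (pos w).le, abs_mul,
          abs_of_pos (pos w)]
        ring
    _ ≤ 1 * 1 * invSqrtOneAddSq w ^ 2 := by
        gcongr
        · exact pow_nonneg (pos w).le c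
        · exact pow_le_one₀ (abs_nonneg _) (abs_mul_le_one w)
        · exact pow_le_one₀ (pos w).le (le_one w)
    _ = (1 + w ^ 2)⁻¹ := by rw [sq_eq, one_mul, one_mul]

/-- The polynomial `p k` in `dᵏ/dwᵏ (1 + w²)^(-1/2) = p k (w) (1 + w²)^(-(2k+1)/2)`. -/
noncomputable def derivPoly : ℕ → ℝ[X]
  | 0 => 1
  | k + 1 => derivative (derivPoly k) * (1 + X ^ 2) - C (2 * k + 1 : ℝ) * X * derivPoly k

theorem natDegree_derivPoly_le (k : ℕ) : (derivPoly k).natDegree ≤ k := by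
  induction k with
  | zero => simp [derivPoly]
  | succ k ih =>
    refine (natDegree_sub_le _ _).trans (max_le ?_ ?_)
    · rcases eq_or_ne k 0 with rfl | hk
      · simp [derivPoly]
      · have hquad : (1 + X ^ 2 : ℝ[X]).natDegree ≤ 2 := by compute_degree
        refine (natDegree_mul_le_of_le ((natDegree_derivative_le _).trans
          (Nat.sub_le_sub_right ih 1)) hquad).trans ?_
        omega
    · refine (natDegree_mul_le_of_le (m := 1) (by compute_degree) ih).trans ?_
      omega

theorem hasDerivAt_derivPoly_eval_mul_pow (k : ℕ) (w : ℝ) :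
    HasDerivAt (fun w => (derivPoly k).eval w * invSqrtOneAddSq w ^ (2 * k + 1))
      ((derivPoly (k + 1)).eval w * invSqrtOneAddSq w ^ (2 * (k + 1) + 1)) w := by
  refine (((derivPoly k).hasDerivAt w).mul ((hasDerivAt w).pow (2 * k + 1))).congr_deriv ?_
  have hsq : (1 + w ^ 2) * invSqrtOneAddSq w ^ 2 = 1 := by
    rw [sq_eq]; exact mul_inv_cancel₀ (by positivity)
  simp only [derivPoly, eval_sub, eval_mul, eval_add, eval_one, eval_pow, eval_X, eval_C,
    Pi.pow_apply, Nat.add_sub_cancel]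
  push_cast
  linear_combination -(derivative (derivPoly k)).eval w * invSqrtOneAddSq w ^ (2 * k + 1) * hsq

theorem iteratedDeriv_eq (k : ℕ) : iteratedDeriv k invSqrtOneAddSq =
    fun w => (derivPoly k).eval w * invSqrtOneAddSq w ^ (2 * k + 1) := by
  induction k with
  | zero => simp [derivPoly]
  | succ k ih =>
    ext w
    rw [iteratedDeriv_succ, ih, (hasDerivAt_derivPoly_eval_mul_pow k w).deriv]

theorem hasDerivAt_iteratedDeriv (k : ℕ) (w : ℝ) :
    HasDerivAt (iteratedDeriv k invSqrtOneAddSq) (iteratedDeriv (k + 1) invSqrtOneAddSq w) w := by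
  rw [iteratedDeriv_eq, iteratedDeriv_eq]
  exact hasDerivAt_derivPoly_eval_mul_pow k w

theorem integrable_iteratedDeriv_succ (k : ℕ) :
    Integrable (iteratedDeriv (k + 1) invSqrtOneAddSq) := by
  have hdeg : (derivPoly (k + 1)).natDegree < k + 2 :=
    Nat.lt_succ_of_le (natDegree_derivPoly_le (k + 1))
  simp_rw [iteratedDeriv_eq, eval_eq_sum_range' hdeg, Finset.sum_mul, mul_assoc]
  refine integrable_finsetSum _ fun i hi => (integrable_pow_mul_pow ?_).const_mul _
  have := Finset.mem_range.1 hi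
  omega

theorem iteratedDeriv_apply_zero (k : ℕ) :
    iteratedDeriv k invSqrtOneAddSq 0 = (derivPoly k).eval 0 := by
  simp only [iteratedDeriv_eq, apply_zero, one_pow, mul_one]

theorem iteratedDeriv_one_zero : iteratedDeriv 1 invSqrtOneAddSq 0 = 0 := by
  rw [iteratedDeriv_apply_zero]
  simp [derivPoly]

theorem iteratedDeriv_two_zero : iteratedDeriv 2 invSqrtOneAddSq 0 = -1 := by
  rw [iteratedDeriv_apply_zero]
  simp [derivPoly]

theorem iteratedDeriv_three_zero : iteratedDeriv 3 invSqrtOneAddSq 0 = 0 := by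
  rw [iteratedDeriv_apply_zero]
  simp [derivPoly]

end invSqrtOneAddSq

/-! ### The oscillatory integral `z ∫₀^∞ exp(iz sinh u) du` -/

/-- The continuous extension to the closed upper half-plane of `z ∫₀^∞ exp(iz sinh u) du`. The
integral converges absolutely only for `0 < Im z`; the substitution `w = sinh u` and one integration
by parts give the absolutely convergent expression used here. -/
noncomputable def sinhOscillatory (z : ℂ) : ℂ :=
  I * (1 + halfLineFourier (iteratedDeriv 1 invSqrtOneAddSq) z)

namespace sinhOscillatory

theorem integrableOn_iteratedDeriv_succ (k : ℕ) :
    IntegrableOn (iteratedDeriv (k + 1) invSqrtOneAddSq) (Ioi 0) :=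
  (invSqrtOneAddSq.integrable_iteratedDeriv_succ k).integrableOn

theorem exists_norm_le : ∃ C : ℝ, ∀ z : ℂ, 0 ≤ z.im → ‖sinhOscillatory z‖ ≤ C := by
  refine ⟨1 + ∫ w in Ioi (0 : ℝ), ‖iteratedDeriv 1 invSqrtOneAddSq w‖, fun z hz => ?_⟩
  rw [sinhOscillatory, norm_mul, Complex.norm_I, one_mul]
  refine norm_add_le_of_le norm_one.le ?_
  exact halfLineFourier.norm_le (integrableOn_iteratedDeriv_succ 0) hz

theorem continuousOn : ContinuousOn sinhOscillatory {z | 0 ≤ z.im} :=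
  continuousOn_const.mul (continuousOn_const.add
    (halfLineFourier.continuousOn (integrableOn_iteratedDeriv_succ 0)))

theorem differentiableOn : DifferentiableOn ℂ sinhOscillatory {z | 0 < z.im} :=
  ((halfLineFourier.differentiableOn (integrableOn_iteratedDeriv_succ 0)).const_add 1).const_mul I

theorem neg_ofReal (t : ℝ) : sinhOscillatory (-t : ℝ) = -conj (sinhOscillatory t) := by
  rw [sinhOscillatory, sinhOscillatory, halfLineFourier.neg_ofReal]
  simp

theorem exists_norm_sub_le : ∃ C : ℝ, ∀ z : ℂ, 0 ≤ z.im → z ≠ 0 →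
    ‖sinhOscillatory z - I * (1 + 1 / z ^ 2)‖ ≤ C / ‖z‖ ^ 4 := by
  set g := fun k => iteratedDeriv (k + 1) invSqrtOneAddSq
  refine ⟨‖(g 3 0 : ℂ)‖ + ∫ w in Ioi (0 : ℝ), ‖g 4 w‖, fun z hz hz0 => ?_⟩
  have hexpand := halfLineFourier.eq_sum_add (g := g)
    (fun k => invSqrtOneAddSq.hasDerivAt_iteratedDeriv (k + 1)) integrableOn_iteratedDeriv_succ
    hz hz0 4
  have hrem : sinhOscillatory z - I * (1 + 1 / z ^ 2)
      = I * (g 3 0 + halfLineFourier (g 4) z) / z ^ 4 := by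
    simp only [Finset.sum_range_succ, Finset.sum_range_zero, g, zero_add,
      invSqrtOneAddSq.iteratedDeriv_one_zero, Nat.reduceAdd,
      invSqrtOneAddSq.iteratedDeriv_two_zero, invSqrtOneAddSq.iteratedDeriv_three_zero] at hexpand
    rw [sinhOscillatory, hexpand]
    simp only [div_pow, Complex.I_sq, Complex.I_pow_four, g, Nat.reduceAdd]
    push_cast
    ring
  rw [hrem, norm_div, norm_mul, Complex.norm_I, one_mul, norm_pow]
  gcongr
  exact norm_add_le_of_le le_rfl (halfLineFourier.norm_le (integrableOn_iteratedDeriv_succ 4) hz)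

end sinhOscillatory

/-! ### Integrals of powers of the hyperbolic secant -/

theorem one_add_sq_div_two_le_cosh (v : ℝ) : 1 + v ^ 2 / 2 ≤ Real.cosh v := by
  have hhalf : |v / 2| ≤ |Real.sinh (v / 2)| := by
    rw [Real.abs_sinh]; exact Real.self_le_sinh_iff.2 (abs_nonneg _)
  calc 1 + v ^ 2 / 2 = 1 + 2 * (v / 2) ^ 2 := by ring
    _ ≤ 1 + 2 * Real.sinh (v / 2) ^ 2 := by gcongr 1 + 2 * ?_; exact sq_le_sq.2 hhalf
    _ = Real.cosh (2 * (v / 2)) := by rw [Real.cosh_two_mul, Real.cosh_sq]; ring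
    _ = Real.cosh v := by rw [mul_div_cancel₀ v two_ne_zero]

theorem cosh_half_le_sqrt_cosh (v : ℝ) : Real.cosh (v / 2) ≤ √(Real.cosh v) := by
  apply Real.le_sqrt_of_sq_le
  calc Real.cosh (v / 2) ^ 2 ≤ Real.cosh (v / 2) ^ 2 + Real.sinh (v / 2) ^ 2 :=
        le_add_of_nonneg_right (sq_nonneg _)
    _ = Real.cosh v := by rw [← Real.cosh_two_mul, mul_div_cancel₀ v two_ne_zero]

theorem continuous_inv_cosh : Continuous fun v => (Real.cosh v)⁻¹ :=
  Real.continuous_cosh.inv₀ fun v => (Real.cosh_pos v).ne'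

theorem integrable_inv_cosh : Integrable fun v => (Real.cosh v)⁻¹ := by
  refine (integrable_inv_one_add_sq.const_mul 2).mono' continuous_inv_cosh.aestronglyMeasurable
    (ae_of_all _ fun v => ?_)
  have hcosh := Real.cosh_pos v
  rw [norm_of_nonneg (by positivity), ← div_eq_mul_inv, inv_eq_one_div,
    div_le_div_iff₀ hcosh (by positivity)]
  linarith [one_add_sq_div_two_le_cosh v]

theorem integrable_inv_cosh_pow (n : ℕ) : Integrable fun v => (Real.cosh v)⁻¹ ^ (n + 1) := by
  refine integrable_inv_cosh.mono' (continuous_inv_cosh.pow _).aestronglyMeasurable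
    (ae_of_all _ fun v => ?_)
  have hpos : 0 < (Real.cosh v)⁻¹ := inv_pos.2 (Real.cosh_pos v)
  rw [norm_of_nonneg (by positivity)]
  exact pow_le_of_le_one hpos.le (inv_le_one_of_one_le₀ (Real.one_le_cosh v)) n.succ_ne_zero

theorem integrable_inv_sqrt_cosh : Integrable fun v => (√(Real.cosh v))⁻¹ := by
  have hpos (v : ℝ) : 0 < √(Real.cosh v) := Real.sqrt_pos.2 (Real.cosh_pos v)
  refine (integrable_inv_cosh.comp_div two_ne_zero).mono'
    (Real.continuous_cosh.sqrt.inv₀ fun v => (hpos v).ne').aestronglyMeasurable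
    (ae_of_all _ fun v => ?_)
  rw [norm_of_nonneg (inv_nonneg.2 (hpos v).le)]
  exact inv_anti₀ (Real.cosh_pos _) (cosh_half_le_sqrt_cosh v)

theorem tendsto_sinh_atTop : Tendsto Real.sinh atTop atTop :=
  Real.sinhOrderIso.tendsto_atTop

theorem tendsto_cosh_atTop : Tendsto Real.cosh atTop atTop :=
  tendsto_atTop_mono (fun x => (Real.sinh_lt_cosh x).le) tendsto_sinh_atTop

theorem tendsto_cosh_atBot : Tendsto Real.cosh atBot atTop := by
  simpa only [Function.comp_def, Real.cosh_neg] using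
    tendsto_cosh_atTop.comp tendsto_neg_atBot_atTop

theorem hasDerivAt_arctan_sinh (v : ℝ) :
    HasDerivAt (fun v => Real.arctan (Real.sinh v)) (Real.cosh v)⁻¹ v := by
  refine (Real.hasDerivAt_sinh v).arctan.congr_deriv ?_
  have := Real.cosh_pos v
  rw [add_comm, ← Real.cosh_sq]
  field_simp

theorem tendsto_arctan_sinh_atTop :
    Tendsto (fun v => Real.arctan (Real.sinh v)) atTop (𝓝 (π / 2)) :=
  (Real.tendsto_arctan_atTop.mono_right nhdsWithin_le_nhds).comp tendsto_sinh_atTop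

theorem integral_Ioi_inv_cosh : ∫ v in Ioi (0 : ℝ), (Real.cosh v)⁻¹ = π / 2 := by
  simpa using integral_Ioi_of_hasDerivAt_of_tendsto' (a := 0)
    (fun v _ => hasDerivAt_arctan_sinh v) integrable_inv_cosh.integrableOn
    tendsto_arctan_sinh_atTop

theorem tendsto_sinh_div_cosh_sq_atTop :
    Tendsto (fun v => Real.sinh v / Real.cosh v ^ 2) atTop (𝓝 0) := by
  refine squeeze_zero_norm (fun v => ?_) tendsto_cosh_atTop.inv_tendsto_atTop
  have hcosh := Real.cosh_pos v
  have hsinh : |Real.sinh v| ≤ Real.cosh v := by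
    rw [Real.abs_sinh, ← Real.cosh_abs]; exact (Real.sinh_lt_cosh _).le
  rw [norm_div, norm_eq_abs, norm_of_nonneg (by positivity), div_le_iff₀ (by positivity),
    Pi.inv_apply, sq, inv_mul_cancel_left₀ hcosh.ne']
  exact hsinh

theorem hasDerivAt_half_sinh_div_cosh_sq_add_arctan_sinh (v : ℝ) :
    HasDerivAt (fun v => 1 / 2 * (Real.sinh v / Real.cosh v ^ 2 + Real.arctan (Real.sinh v)))
      ((Real.cosh v)⁻¹ ^ 3) v := by
  have hcosh := (Real.cosh_pos v).ne'
  refine ((((Real.hasDerivAt_sinh v).fun_div ((Real.hasDerivAt_cosh v).fun_pow 2)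
    (pow_ne_zero 2 hcosh)).add (hasDerivAt_arctan_sinh v)).const_mul (1 / 2)).congr_deriv ?_
  field_simp
  linear_combination 2 * Real.cosh v * Real.cosh_sq v

theorem integral_Ioi_inv_cosh_pow_three :
    ∫ v in Ioi (0 : ℝ), (Real.cosh v)⁻¹ ^ 3 = π / 4 := by
  rw [integral_Ioi_of_hasDerivAt_of_tendsto'
    (fun v _ => hasDerivAt_half_sinh_div_cosh_sq_add_arctan_sinh v)
    (integrable_inv_cosh_pow 2).integrableOn
    ((tendsto_sinh_div_cosh_sq_atTop.add tendsto_arctan_sinh_atTop).const_mul (1 / 2))]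
  simp only [Real.sinh_zero, zero_div, Real.arctan_zero, add_zero, zero_add, mul_zero, sub_zero]
  ring

/-! ### The holomorphic continuation of `t K₀(t) (K₀(t) + iπ I₀(t))` -/

/-- The function `∫₀^∞ M(2z cosh v) / cosh v dv` on the closed upper half-plane, where `M` is
`sinhOscillatory`. Its value at `t > 0` is `t K₀(t) (K₀(t) + iπ I₀(t))`. -/
noncomputable def besselHankel (z : ℂ) : ℂ :=
  ∫ v in Ioi (0 : ℝ), sinhOscillatory (2 * z * Real.cosh v) * ((Real.cosh v)⁻¹ : ℝ)

namespace besselHankel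

variable {z : ℂ}

theorem im_two_mul_mul_cosh (z : ℂ) (v : ℝ) :
    (2 * z * (Real.cosh v : ℂ)).im = 2 * z.im * Real.cosh v := by
  rw [Complex.im_mul_ofReal, Complex.mul_im, Complex.re_ofNat, Complex.im_ofNat, zero_mul, add_zero]

theorem im_two_mul_mul_cosh_nonneg (hz : 0 ≤ z.im) (v : ℝ) :
    0 ≤ (2 * z * (Real.cosh v : ℂ)).im := by
  rw [im_two_mul_mul_cosh]
  exact mul_nonneg (by linarith) (Real.cosh_pos v).le

theorem continuous_integrand (hz : 0 ≤ z.im) :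
    Continuous fun v : ℝ => sinhOscillatory (2 * z * Real.cosh v) * ((Real.cosh v)⁻¹ : ℝ) :=
  (sinhOscillatory.continuousOn.comp_continuous
      (continuous_const.mul (Complex.continuous_ofReal.comp Real.continuous_cosh))
      (im_two_mul_mul_cosh_nonneg hz)).mul
    (Complex.continuous_ofReal.comp continuous_inv_cosh)

theorem exists_norm_integrand_le : ∃ C : ℝ, ∀ z : ℂ, 0 ≤ z.im → ∀ v : ℝ,
    ‖sinhOscillatory (2 * z * Real.cosh v) * ((Real.cosh v)⁻¹ : ℝ)‖ ≤ C * (Real.cosh v)⁻¹ := by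
  obtain ⟨C, hC⟩ := sinhOscillatory.exists_norm_le
  refine ⟨C, fun z hz v => ?_⟩
  have hcosh : 0 ≤ (Real.cosh v)⁻¹ := (inv_pos.2 (Real.cosh_pos v)).le
  rw [norm_mul, Complex.norm_of_nonneg hcosh]
  exact mul_le_mul_of_nonneg_right (hC _ (im_two_mul_mul_cosh_nonneg hz v)) hcosh

theorem integrableOn_integrand (hz : 0 ≤ z.im) :
    IntegrableOn (fun v : ℝ => sinhOscillatory (2 * z * Real.cosh v) * ((Real.cosh v)⁻¹ : ℝ))
      (Ioi 0) := by
  obtain ⟨C, hC⟩ := exists_norm_integrand_le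
  exact (integrable_inv_cosh.const_mul C).integrableOn.mono'
    (continuous_integrand hz).aestronglyMeasurable (ae_of_all _ (hC z hz))

theorem continuousOn : ContinuousOn besselHankel {z | 0 ≤ z.im} := by
  obtain ⟨C, hC⟩ := exists_norm_integrand_le
  refine continuousOn_of_dominated (fun z hz => (continuous_integrand hz).aestronglyMeasurable)
    (fun z hz => ae_of_all _ (hC z hz)) (integrable_inv_cosh.const_mul C).integrableOn
    (ae_of_all _ fun v => ContinuousOn.mul ?_ continuousOn_const)
  exact sinhOscillatory.continuousOn.comp (by fun_prop)
    fun z hz => im_two_mul_mul_cosh_nonneg hz v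

theorem differentiableOn : DifferentiableOn ℂ besselHankel {z | 0 < z.im} := by
  obtain ⟨C, hC⟩ := exists_norm_integrand_le
  refine differentiableOn_integral_of_norm_le (isOpen_lt continuous_const Complex.continuous_im)
    (fun z hz => (continuous_integrand (le_of_lt hz)).aestronglyMeasurable)
    (ae_of_all _ fun v => DifferentiableOn.mul_const ?_ _)
    (ae_of_all _ fun v z hz => hC z (le_of_lt hz) v)
    (integrable_inv_cosh.const_mul C).integrableOn
  refine sinhOscillatory.differentiableOn.comp (by fun_prop) fun z (hz : 0 < z.im) => ?_
  rw [mem_ofPred_eq, im_two_mul_mul_cosh]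
  exact mul_pos (by linarith) (Real.cosh_pos v)

theorem neg_ofReal (t : ℝ) : besselHankel (-t : ℝ) = -conj (besselHankel t) := by
  rw [besselHankel, besselHankel, ← integral_conj, ← integral_neg]
  congr 1 with v
  have hneg : 2 * ((-t : ℝ) : ℂ) * Real.cosh v = (-(2 * t * Real.cosh v) : ℝ) := by
    push_cast; ring
  rw [hneg, sinhOscillatory.neg_ofReal, map_mul, Complex.conj_ofReal]
  push_cast
  ring

theorem leading_terms_eq (z : ℂ) (v : ℝ) :
    I * (1 + 1 / (2 * z * Real.cosh v) ^ 2) * ((Real.cosh v)⁻¹ : ℝ)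
      = I * ((Real.cosh v)⁻¹ : ℝ) + I / (4 * z ^ 2) * ((Real.cosh v)⁻¹ ^ 3 : ℝ) := by
  push_cast; ring

theorem integrableOn_leading_terms (z : ℂ) :
    IntegrableOn (fun v : ℝ => I * (1 + 1 / (2 * z * Real.cosh v) ^ 2) * ((Real.cosh v)⁻¹ : ℝ))
      (Ioi 0) := by
  simp_rw [leading_terms_eq]
  exact (integrable_inv_cosh.integrableOn.ofReal.const_mul _).add
    ((integrable_inv_cosh_pow 2).integrableOn.ofReal.const_mul _)

theorem integral_leading_terms (z : ℂ) :
    ∫ v in Ioi (0 : ℝ), I * (1 + 1 / (2 * z * Real.cosh v) ^ 2) * ((Real.cosh v)⁻¹ : ℝ)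
      = I * (π / 2 + π / (16 * z ^ 2)) := by
  simp_rw [leading_terms_eq]
  rw [integral_add (integrable_inv_cosh.integrableOn.ofReal.const_mul _)
      ((integrable_inv_cosh_pow 2).integrableOn.ofReal.const_mul _), integral_const_mul,
    integral_const_mul, integral_complex_ofReal, integral_complex_ofReal, integral_Ioi_inv_cosh,
    integral_Ioi_inv_cosh_pow_three]
  push_cast
  ring

theorem exists_norm_sub_le : ∃ C : ℝ, ∀ z : ℂ, 0 ≤ z.im → z ≠ 0 →
    ‖besselHankel z - I * (π / 2 + π / (16 * z ^ 2))‖ ≤ C / ‖z‖ ^ 4 := by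
  obtain ⟨C, hC⟩ := sinhOscillatory.exists_norm_sub_le
  have hC0 : 0 ≤ C := by simpa using (norm_nonneg _).trans (hC 1 (by simp) one_ne_zero)
  refine ⟨C * (π / 2), fun z hz hz0 => ?_⟩
  have hpointwise (v : ℝ) : ‖sinhOscillatory (2 * z * Real.cosh v) * ((Real.cosh v)⁻¹ : ℝ)
      - I * (1 + 1 / (2 * z * Real.cosh v) ^ 2) * ((Real.cosh v)⁻¹ : ℝ)‖
      ≤ C / ‖z‖ ^ 4 * (Real.cosh v)⁻¹ := by
    have hcosh := Real.cosh_pos v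
    have harg : 2 * z * Real.cosh v ≠ 0 :=
      mul_ne_zero (mul_ne_zero two_ne_zero hz0) (Complex.ofReal_ne_zero.2 hcosh.ne')
    have hnorm : ‖z‖ ≤ ‖2 * z * (Real.cosh v : ℂ)‖ := by
      rw [norm_mul, norm_mul, Complex.norm_of_nonneg hcosh.le, Complex.norm_ofNat]
      nlinarith [norm_nonneg z, Real.one_le_cosh v]
    rw [← sub_mul, norm_mul, Complex.norm_of_nonneg (inv_pos.2 hcosh).le]
    gcongr
    exact (hC _ (im_two_mul_mul_cosh_nonneg hz v) harg).trans (by gcongr)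
  rw [← integral_leading_terms, besselHankel,
    ← integral_sub (integrableOn_integrand hz) (integrableOn_leading_terms z)]
  calc _ ≤ ∫ v in Ioi (0 : ℝ), C / ‖z‖ ^ 4 * (Real.cosh v)⁻¹ :=
        norm_integral_le_of_norm_le (integrable_inv_cosh.const_mul _).integrableOn
          (ae_of_all _ hpointwise)
    _ = C * (π / 2) / ‖z‖ ^ 4 := by rw [integral_const_mul, integral_Ioi_inv_cosh]; ring

end besselHankel

theorem eventually_ne_zero_and_im_nonneg_upper :
    ∀ᶠ z : ℂ in cobounded ℂ ⊓ 𝓟 {z | 0 ≤ z.im}, z ≠ 0 ∧ 0 ≤ z.im := by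
  filter_upwards [mem_inf_of_left (eventually_ne_cobounded (0 : ℂ)),
    mem_inf_of_right (mem_principal_self _)] with z hz him using ⟨hz, him⟩

namespace besselHankel

theorem isBigO_sub :
    (fun z => besselHankel z - I * (π / 2 + π / (16 * z ^ 2)))
      =O[cobounded ℂ ⊓ 𝓟 {z | 0 ≤ z.im}] fun z => (z ^ 4)⁻¹ := by
  obtain ⟨C, hC⟩ := exists_norm_sub_le
  refine IsBigO.of_bound C ?_
  filter_upwards [eventually_ne_zero_and_im_nonneg_upper] with z ⟨hz, him⟩
  rw [norm_inv, norm_pow, ← div_eq_mul_inv]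
  exact hC z him hz

theorem isBigO_leading_terms :
    (fun z : ℂ => I * (π / 2 + π / (16 * z ^ 2)))
      =O[cobounded ℂ ⊓ 𝓟 {z | 0 ≤ z.im}] fun _ => (1 : ℂ) := by
  have hinv : Tendsto (fun z : ℂ => z⁻¹) (cobounded ℂ ⊓ 𝓟 {z | 0 ≤ z.im}) (𝓝 0) :=
    tendsto_inv₀_cobounded.mono_left inf_le_left
  have hlim := ((hinv.pow 2).const_mul (π / 16 : ℂ)).const_add (π / 2 : ℂ) |>.const_mul I
  refine (hlim.congr fun z => ?_).isBigO_one ℂ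
  ring

theorem isBigO_one :
    besselHankel =O[cobounded ℂ ⊓ 𝓟 {z | 0 ≤ z.im}] fun _ => (1 : ℂ) := by
  have hinv : Tendsto (fun z : ℂ => (z ^ 4)⁻¹) (cobounded ℂ ⊓ 𝓟 {z | 0 ≤ z.im}) (𝓝 0) := by
    simpa only [inv_pow, zero_pow four_ne_zero] using
      (tendsto_inv₀_cobounded (α := ℂ)).mono_left inf_le_left |>.pow 4
  simpa only [sub_add_cancel] using
    (isBigO_sub.trans (hinv.isBigO_one ℂ)).add isBigO_leading_terms

theorem continuous_ofReal : Continuous fun t : ℝ => besselHankel t :=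
  continuousOn.comp_continuous Complex.continuous_ofReal fun t => (Complex.ofReal_im t).ge

theorem re_ofReal_isBigO :
    (fun t : ℝ => (besselHankel t).re) =O[cocompact ℝ] fun t : ℝ => (t ^ 4)⁻¹ := by
  refine IsBigO.trans (isBigO_of_le _ fun t : ℝ => ?_ :
    _ =O[_] fun t : ℝ => besselHankel t - I * (π / 2 + π / (16 * t ^ 2)))
    ((isBigO_sub.comp_tendsto tendsto_ofReal_cocompact_upper).trans
      (isBigO_of_le _ fun t => ?_))
  · have hre : (besselHankel t - I * (π / 2 + π / (16 * t ^ 2))).re = (besselHankel t).re := by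
      have hreal : I * ((π : ℂ) / 2 + π / (16 * t ^ 2))
          = I * ((π / 2 + π / (16 * t ^ 2) : ℝ) : ℂ) := by push_cast; rfl
      rw [hreal, Complex.sub_re, Complex.I_mul_re, Complex.ofReal_im, neg_zero, sub_zero]
    rw [← hre]
    exact Complex.abs_re_le_norm _
  · rw [Function.comp_apply, ← Complex.ofReal_pow, ← Complex.ofReal_inv, Complex.norm_real]

theorem im_ofReal_isBigO_one :
    (fun t : ℝ => (besselHankel t).im) =O[cocompact ℝ] fun _ => (1 : ℝ) := by
  refine (isBigO_of_le _ fun t : ℝ => Complex.abs_im_le_norm (besselHankel t)).trans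
    ((isBigO_one.comp_tendsto tendsto_ofReal_cocompact_upper).trans
      (isBigO_of_le _ fun t => ?_))
  simp only [Function.comp_apply, norm_one, le_refl]

theorem integrable_sq_mul_re_sq_mul_im :
    Integrable fun t : ℝ => t ^ 2 * (besselHankel t).re ^ 2 * (besselHankel t).im := by
  have hre := Complex.continuous_re.comp continuous_ofReal
  have him := Complex.continuous_im.comp continuous_ofReal
  refine integrable_of_continuous_of_isBigO_sq_inv
    (((continuous_pow 2).mul (hre.pow 2)).mul him) ?_
  refine ((((isBigO_refl _ _).mul (re_ofReal_isBigO.pow 2)).mul im_ofReal_isBigO_one).trans ?_)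
  have hinv : Tendsto (fun t : ℝ => t⁻¹ ^ 4) (cocompact ℝ) (𝓝 0) := by
    simpa only [Metric.cobounded_eq_cocompact, zero_pow four_ne_zero] using
      (tendsto_inv₀_cobounded (α := ℝ)).pow 4
  refine ((hinv.isBigO_one ℝ).mul (isBigO_refl (fun t : ℝ => (t ^ 2)⁻¹) _)).congr' ?_ ?_
  · rw [← Metric.cobounded_eq_cocompact]
    filter_upwards [eventually_ne_cobounded (0 : ℝ)] with t ht
    field_simp
  · exact .of_forall fun t => one_mul _

end besselHankel

/-! ### A cubic combination with quadratic decay -/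

/-- The combination `z² W³ + π² (z²/4 + 1/16) W` of `W = besselHankel`. The coefficients make the
leading terms of the expansion of `W² + π²/4 + π²/(16z²)` at infinity cancel, and the imaginary
part of its boundary values is the difference of the two integrands to be compared. -/
noncomputable def besselHankelCubic (z : ℂ) : ℂ :=
  z ^ 2 * besselHankel z ^ 3 + π ^ 2 * besselHankel z * (z ^ 2 / 4 + 1 / 16)

namespace besselHankelCubic

theorem eq_mul_remainder {z : ℂ} (hz : z ≠ 0) :
    besselHankelCubic z = z ^ 2 * besselHankel z
      * ((besselHankel z - I * (π / 2 + π / (16 * z ^ 2)))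
          * (besselHankel z + I * (π / 2 + π / (16 * z ^ 2))) - π ^ 2 / 256 * (z ^ 4)⁻¹) := by
  have hprod : (besselHankel z - I * (π / 2 + π / (16 * z ^ 2)))
      * (besselHankel z + I * (π / 2 + π / (16 * z ^ 2)))
      = besselHankel z ^ 2 + (π / 2 + π / (16 * z ^ 2)) ^ 2 := by
    linear_combination -(π / 2 + π / (16 * z ^ 2) : ℂ) ^ 2 * Complex.I_sq
  rw [hprod, besselHankelCubic]
  field_simp
  ring

theorem isBigO : besselHankelCubic =O[cobounded ℂ ⊓ 𝓟 {z | 0 ≤ z.im}] fun z => (z ^ 2)⁻¹ := by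
  have hremainder : (fun z => (besselHankel z - I * (π / 2 + π / (16 * z ^ 2)))
      * (besselHankel z + I * (π / 2 + π / (16 * z ^ 2))) - π ^ 2 / 256 * (z ^ 4)⁻¹)
      =O[cobounded ℂ ⊓ 𝓟 {z | 0 ≤ z.im}] fun z => (z ^ 4)⁻¹ := by
    simpa only [mul_one] using (besselHankel.isBigO_sub.mul
      (besselHankel.isBigO_one.add besselHankel.isBigO_leading_terms)).sub
      ((isBigO_refl _ _).const_mul_left _)
  refine (((isBigO_refl (fun z : ℂ => z ^ 2) _).mul besselHankel.isBigO_one).mul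
    hremainder).congr' ?_ ?_
  · filter_upwards [eventually_ne_zero_and_im_nonneg_upper] with z hz
    exact (eq_mul_remainder hz.1).symm
  · filter_upwards [eventually_ne_zero_and_im_nonneg_upper] with z hz
    have := hz.1
    field_simp

theorem isLittleO_inv :
    besselHankelCubic =o[cobounded ℂ ⊓ 𝓟 {z | 0 ≤ z.im}] fun z => z⁻¹ := by
  have hinv : (fun z : ℂ => z⁻¹) =o[cobounded ℂ ⊓ 𝓟 {z | 0 ≤ z.im}] fun _ => (1 : ℂ) :=
    (isLittleO_one_iff ℂ).2 (tendsto_inv₀_cobounded.mono_left inf_le_left)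
  refine isBigO.trans_isLittleO ?_
  simpa only [sq, mul_inv, mul_one] using (isBigO_refl (fun z : ℂ => z⁻¹) _).mul_isLittleO hinv

theorem continuousOn : ContinuousOn besselHankelCubic {z | 0 ≤ z.im} := by
  have := besselHankel.continuousOn
  unfold besselHankelCubic
  fun_prop

theorem differentiableOn : DifferentiableOn ℂ besselHankelCubic {z | 0 < z.im} := by
  have := besselHankel.differentiableOn
  unfold besselHankelCubic
  fun_prop

theorem neg_ofReal (t : ℝ) : besselHankelCubic (-t : ℝ) = -conj (besselHankelCubic t) := by
  have hreal : (t : ℂ) ^ 2 / 4 + 1 / 16 = ((t ^ 2 / 4 + 1 / 16 : ℝ) : ℂ) := by push_cast; rfl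
  rw [besselHankelCubic, besselHankelCubic, besselHankel.neg_ofReal, Complex.ofReal_neg, neg_sq,
    hreal]
  simp only [map_add, map_mul, map_pow, Complex.conj_ofReal]
  ring

theorem integrable_ofReal : Integrable fun t : ℝ => besselHankelCubic t := by
  refine integrable_of_continuous_of_isBigO_sq_inv
    (continuousOn.comp_continuous Complex.continuous_ofReal fun t => (Complex.ofReal_im t).ge)
    ((isBigO.comp_tendsto tendsto_ofReal_cocompact_upper).trans (isBigO_of_le _ fun t => ?_))
  rw [Function.comp_apply, ← Complex.ofReal_pow, ← Complex.ofReal_inv, Complex.norm_real]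

theorem im_ofReal (t : ℝ) :
    (besselHankelCubic t).im = 3 * (t ^ 2 * (besselHankel t).re ^ 2 * (besselHankel t).im)
      - (t ^ 2 * (besselHankel t).im ^ 3 - π ^ 2 * (besselHankel t).im * (t ^ 2 / 4 + 1 / 16)) := by
  have hreal : (t : ℂ) ^ 2 / 4 + 1 / 16 = ((t ^ 2 / 4 + 1 / 16 : ℝ) : ℂ) := by push_cast; rfl
  have hcube (w : ℂ) : (w ^ 3).im = 3 * w.re ^ 2 * w.im - w.im ^ 3 := by
    rw [pow_succ, sq]
    simp only [Complex.mul_im, Complex.mul_re]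
    ring
  rw [besselHankelCubic, hreal, ← Complex.ofReal_pow, ← Complex.ofReal_pow, Complex.add_im,
    Complex.im_mul_ofReal, Complex.im_ofReal_mul, Complex.im_ofReal_mul, hcube]
  ring

end besselHankelCubic

theorem three_mul_integral_re_sq_mul_im_besselHankel :
    3 * ∫ t in Ioi (0 : ℝ), t ^ 2 * (besselHankel t).re ^ 2 * (besselHankel t).im
      = ∫ t in Ioi (0 : ℝ), (t ^ 2 * (besselHankel t).im ^ 3
          - π ^ 2 * (besselHankel t).im * (t ^ 2 / 4 + 1 / 16)) := by
  have hzero : ∫ t in Ioi (0 : ℝ), (besselHankelCubic t).im = 0 :=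
    integral_Ioi_im_eq_zero_of_isLittleO_inv besselHankelCubic.continuousOn
      besselHankelCubic.differentiableOn besselHankelCubic.isLittleO_inv
      besselHankelCubic.integrable_ofReal besselHankelCubic.neg_ofReal
  have hint := besselHankel.integrable_sq_mul_re_sq_mul_im.integrableOn (s := Ioi 0)
  have him : IntegrableOn (fun t : ℝ => (besselHankelCubic t).im) (Ioi 0) :=
    besselHankelCubic.integrable_ofReal.im.integrableOn
  calc 3 * ∫ t in Ioi (0 : ℝ), t ^ 2 * (besselHankel t).re ^ 2 * (besselHankel t).im
      = ∫ t in Ioi (0 : ℝ), (3 * (t ^ 2 * (besselHankel t).re ^ 2 * (besselHankel t).im)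
          - (besselHankelCubic t).im) := by
        rw [integral_sub (hint.const_mul 3) him, hzero, integral_const_mul, sub_zero]
    _ = _ := by simp_rw [besselHankelCubic.im_ofReal, sub_sub_cancel]

/-! ### Contour integrals of `exp(ix sinh ζ)` -/

theorem integrable_exp_neg_mul_cosh {x : ℝ} (hx : 0 < x) :
    Integrable fun u : ℝ => Real.exp (-(x * Real.cosh u)) := by
  refine (integrable_inv_cosh.const_mul x⁻¹).mono'
    (Continuous.aestronglyMeasurable (by fun_prop)) (ae_of_all _ fun u => ?_)
  have hpos : 0 < x * Real.cosh u := mul_pos hx (Real.cosh_pos u)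
  rw [Real.norm_of_nonneg (Real.exp_pos _).le, Real.exp_neg, ← mul_inv]
  exact inv_anti₀ hpos (by linarith [Real.add_one_le_exp (x * Real.cosh u)])

theorem integral_exp_neg_mul_cosh (x : ℝ) :
    ∫ u : ℝ, Real.exp (-(x * Real.cosh u)) = 2 * K0 x := by
  rw [K0, ← integral_comp_abs (f := fun u => Real.exp (-(x * Real.cosh u)))]
  simp only [Real.cosh_abs]

theorem sinh_ofReal_add_ofReal_mul_I (u y : ℝ) : Complex.sinh (u + y * I)
    = ((Real.sinh u * Real.cos y : ℝ) : ℂ) + ((Real.cosh u * Real.sin y : ℝ) : ℂ) * I := by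
  rw [Complex.sinh_add, Complex.sinh_mul_I, Complex.cosh_mul_I]
  push_cast
  ring

theorem sin_pos_of_mem_uIoc_pi_div_two {α y : ℝ} (hα : 0 ≤ α) (hα' : α < π)
    (hy : y ∈ uIoc α (π / 2)) : 0 < Real.sin y := by
  have := Real.pi_pos
  rcases mem_uIoc.1 hy with ⟨hlow, hup⟩ | ⟨hlow, hup⟩ <;>
    exact Real.sin_pos_of_pos_of_lt_pi (by linarith) (by linarith)

/-- The entire function `ζ ↦ exp(ix sinh ζ)`. It equals `exp(-x cosh u)` at `ζ = u + iπ/2`, so that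
`K₀(x)` is obtained by shifting its integrals to the line `Im ζ = π/2`. -/
noncomputable def expISinh (x : ℝ) (ζ : ℂ) : ℂ :=
  Complex.exp (I * x * Complex.sinh ζ)

/-- The integral `∫₀^{π/2} exp(-x sin y) dy`, which is `π/2` times the difference of the modified
Bessel function `I₀` and the modified Struve function `L₀`. -/
noncomputable def besselStruve (x : ℝ) : ℝ :=
  ∫ y in (0 : ℝ)..(π / 2), Real.exp (-(x * Real.sin y))

namespace expISinh

theorem differentiable (x : ℝ) : Differentiable ℂ (expISinh x) :=
  (Complex.differentiable_sinh.const_mul _).cexp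

theorem continuous (x : ℝ) : Continuous (expISinh x) :=
  (differentiable x).continuous

theorem norm_add_mul_I (x u y : ℝ) :
    ‖expISinh x (u + y * I)‖ = Real.exp (-(x * Real.cosh u * Real.sin y)) := by
  rw [expISinh, Complex.norm_exp, sinh_ofReal_add_ofReal_mul_I, mul_assoc, Complex.I_mul_re,
    Complex.im_ofReal_mul, Complex.add_im, Complex.ofReal_im, zero_add, Complex.im_ofReal_mul,
    Complex.I_im, mul_one, mul_assoc]

theorem add_pi_div_two_mul_I (x u : ℝ) :
    expISinh x (u + (π / 2 : ℝ) * I) = (Real.exp (-(x * Real.cosh u)) : ℝ) := by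
  rw [expISinh, sinh_ofReal_add_ofReal_mul_I, Real.sin_pi_div_two, Real.cos_pi_div_two,
    Complex.ofReal_exp]
  congr 1
  push_cast
  linear_combination (x * Complex.cosh u) * Complex.I_sq

theorem mul_I (x y : ℝ) : expISinh x (y * I) = (Real.exp (-(x * Real.sin y)) : ℝ) := by
  rw [expISinh, Complex.sinh_mul_I, Complex.ofReal_exp]
  congr 1
  push_cast
  linear_combination (x * Complex.sin y) * Complex.I_sq

theorem integral_horizontal_eq (x a b α : ℝ) :
    ∫ u in a..b, expISinh x (u + α * I) = ((∫ u in a..b, Real.exp (-(x * Real.cosh u)) : ℝ) : ℂ)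
      - I * (∫ y in α..(π / 2), expISinh x (b + y * I))
      + I * ∫ y in α..(π / 2), expISinh x (a + y * I) := by
  have hrect := Complex.integral_boundary_rect_eq_zero_of_differentiableOn (expISinh x)
    (a + α * I) (b + (π / 2 : ℝ) * I) (differentiable x).differentiableOn
  simp only [Complex.add_re, Complex.add_im, Complex.re_ofReal_mul, Complex.im_ofReal_mul,
    Complex.ofReal_re, Complex.ofReal_im, Complex.I_re, Complex.I_im, mul_zero, mul_one, add_zero,
    zero_add, add_pi_div_two_mul_I, smul_eq_mul, intervalIntegral.integral_ofReal] at hrect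
  linear_combination hrect

theorem tendsto_integral_vertical {x : ℝ} (hx : 0 < x) {l : Filter ℝ} [l.IsCountablyGenerated]
    (hl : Tendsto Real.cosh l atTop) {α β : ℝ} (hsin : ∀ y ∈ uIoc α β, 0 < Real.sin y) :
    Tendsto (fun b : ℝ => ∫ y in α..β, expISinh x (b + y * I)) l (𝓝 0) := by
  rw [← intervalIntegral.integral_zero (a := α) (b := β) (μ := volume)]
  refine intervalIntegral.tendsto_integral_filter_of_dominated_convergence (fun _ => (1 : ℝ))
    (.of_forall fun b => ?_) (.of_forall fun b => ae_of_all _ fun y hy => ?_)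
    intervalIntegrable_const (ae_of_all _ fun y hy => ?_)
  · exact ((continuous x).comp (by fun_prop)).aestronglyMeasurable
  · rw [norm_add_mul_I, Real.exp_le_one_iff, neg_nonpos]
    exact (mul_pos (mul_pos hx (Real.cosh_pos b)) (hsin y hy)).le
  · rw [tendsto_zero_iff_norm_tendsto_zero]
    simp only [norm_add_mul_I]
    exact Real.tendsto_exp_neg_atTop_nhds_zero.comp
      ((hl.const_mul_atTop hx).atTop_mul_const (hsin y hy))

theorem tendsto_integral_zero_atTop {x : ℝ} (hx : 0 < x) :
    Tendsto (fun R : ℝ => ∫ u in 0..R, expISinh x u) atTop (𝓝 (K0 x + I * besselStruve x)) := by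
  have hrect (R : ℝ) := integral_horizontal_eq x 0 R 0
  simp only [Complex.ofReal_zero, zero_mul, add_zero, zero_add, mul_I,
    intervalIntegral.integral_ofReal] at hrect
  simp_rw [hrect]
  have hK : Tendsto (fun R : ℝ => ((∫ u in 0..R, Real.exp (-(x * Real.cosh u)) : ℝ) : ℂ)) atTop
      (𝓝 (K0 x)) := (Complex.continuous_ofReal.tendsto _).comp <|
    intervalIntegral_tendsto_integral_Ioi 0 (integrable_exp_neg_mul_cosh hx).integrableOn tendsto_id
  have hside := tendsto_integral_vertical hx tendsto_cosh_atTop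
    fun y => sin_pos_of_mem_uIoc_pi_div_two le_rfl Real.pi_pos (y := y)
  simpa only [mul_zero, sub_zero, besselStruve] using (hK.sub (hside.const_mul I)).add_const _

variable {x α : ℝ}

theorem integrable_add_mul_I (hx : 0 < x) (hα : 0 < α) (hα' : α < π) :
    Integrable fun u : ℝ => expISinh x (u + α * I) := by
  refine (integrable_exp_neg_mul_cosh
      (mul_pos hx (Real.sin_pos_of_pos_of_lt_pi hα hα'))).mono'
    ((continuous x).comp (by fun_prop)).aestronglyMeasurable (ae_of_all _ fun u => ?_)
  rw [norm_add_mul_I, mul_right_comm]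

theorem integral_add_mul_I (hx : 0 < x) (hα : 0 < α) (hα' : α < π) :
    ∫ u : ℝ, expISinh x (u + α * I) = (2 * K0 x : ℝ) := by
  have hsin (y : ℝ) := sin_pos_of_mem_uIoc_pi_div_two hα.le hα' (y := y)
  have hright := tendsto_integral_vertical hx tendsto_cosh_atTop hsin
  have hleft := (tendsto_integral_vertical hx tendsto_cosh_atBot hsin).comp
    tendsto_neg_atTop_atBot
  have hK : Tendsto (fun R : ℝ => ((∫ u in (-R)..R, Real.exp (-(x * Real.cosh u)) : ℝ) : ℂ)) atTop
      (𝓝 (2 * K0 x : ℝ)) := by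
    rw [← integral_exp_neg_mul_cosh]
    exact (Complex.continuous_ofReal.tendsto _).comp <| intervalIntegral_tendsto_integral
      (integrable_exp_neg_mul_cosh hx) tendsto_neg_atTop_atBot tendsto_id
  refine tendsto_nhds_unique (intervalIntegral_tendsto_integral
    (integrable_add_mul_I hx hα hα') tendsto_neg_atTop_atBot tendsto_id) ?_
  simp_rw [integral_horizontal_eq]
  simpa only [mul_zero, sub_zero, add_zero, Function.comp_apply, id_eq] using
    (hK.sub (hright.const_mul I)).add (hleft.const_mul I)

theorem integral_zero_eq_integral_sinh (x R : ℝ) :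
    ∫ u in 0..R, expISinh x u
      = ∫ w in 0..Real.sinh R, Complex.exp (I * x * w) * invSqrtOneAddSq w := by
  have hcont : Continuous fun w : ℝ => Complex.exp (I * x * w) * (invSqrtOneAddSq w : ℂ) := by
    have := invSqrtOneAddSq.continuous
    fun_prop
  have hsub := intervalIntegral.integral_deriv_smul_comp (a := 0) (b := R)
    (fun u _ => Real.hasDerivAt_sinh u) Real.continuous_cosh.continuousOn hcont
  rw [Real.sinh_zero] at hsub
  rw [← hsub]
  congr 1 with u
  have hcosh : (Real.cosh u : ℂ) ≠ 0 := Complex.ofReal_ne_zero.2 (Real.cosh_pos u).ne'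
  rw [Function.comp_apply, invSqrtOneAddSq.apply_sinh, Complex.real_smul, Complex.ofReal_inv,
    mul_comm (Complex.exp _), mul_inv_cancel_left₀ hcosh, expISinh, Complex.ofReal_sinh]

end expISinh

theorem sinhOscillatory_ofReal {x : ℝ} (hx : 0 < x) :
    sinhOscillatory x = x * (K0 x + I * besselStruve x) := by
  have hparts := halfLineFourier.tendsto_mul_intervalIntegral (z := x)
    (invSqrtOneAddSq.hasDerivAt_iteratedDeriv 0)
    (sinhOscillatory.integrableOn_iteratedDeriv_succ 0)
    (by simpa only [iteratedDeriv_zero] using invSqrtOneAddSq.tendsto_atTop)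
    (Complex.ofReal_im x).ge
  have hcontour := (expISinh.tendsto_integral_zero_atTop hx).const_mul (x : ℂ)
  simp_rw [expISinh.integral_zero_eq_integral_sinh] at hcontour
  simp only [iteratedDeriv_zero, invSqrtOneAddSq.apply_zero, Complex.ofReal_one] at hparts
  exact tendsto_nhds_unique (hparts.comp tendsto_sinh_atTop) hcontour

/-! ### Product formulas for `K₀²` and `I₀ K₀` -/

theorem integral_exp_neg_mul_cosh_mul_exp_neg_mul_cosh_sub (t v : ℝ) :
    ∫ u : ℝ, Real.exp (-(t * Real.cosh u)) * Real.exp (-(t * Real.cosh (v - u)))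
      = 2 * K0 (2 * t * Real.cosh (v / 2)) := by
  rw [← integral_exp_neg_mul_cosh, ← integral_sub_right_eq_self
    (fun u => Real.exp (-(2 * t * Real.cosh (v / 2) * Real.cosh u))) (v / 2)]
  congr 1 with u
  have hu : Real.cosh u = Real.cosh (u - v / 2 + v / 2) := by rw [sub_add_cancel]
  have hvu : Real.cosh (v - u) = Real.cosh (u - v / 2 - v / 2) := by
    rw [← Real.cosh_neg]; ring_nf
  rw [← Real.exp_add, hu, hvu, Real.cosh_add, Real.cosh_sub (u - v / 2)]
  ring_nf

theorem K0_sq {t : ℝ} (ht : 0 < t) :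
    K0 t ^ 2 = 2 * ∫ v in Ioi (0 : ℝ), K0 (2 * t * Real.cosh v) := by
  have hint := integrable_exp_neg_mul_cosh ht
  have hconv := integral_convolution (ContinuousLinearMap.mul ℝ ℝ) hint hint
  simp_rw [convolution_mul, integral_exp_neg_mul_cosh_mul_exp_neg_mul_cosh_sub,
    ContinuousLinearMap.mul_apply', integral_exp_neg_mul_cosh] at hconv
  have heven : ∫ v : ℝ, K0 (2 * t * Real.cosh v)
      = 2 * ∫ v in Ioi (0 : ℝ), K0 (2 * t * Real.cosh v) := by
    rw [← integral_comp_abs (f := fun v => K0 (2 * t * Real.cosh v))]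
    simp only [Real.cosh_abs]
  rw [integral_const_mul, Measure.integral_comp_div (fun v => K0 (2 * t * Real.cosh v)) 2, heven,
    smul_eq_mul, abs_two] at hconv
  linarith

theorem integral_exp_mul_cos_two_mul (t : ℝ) :
    ∫ α in 0..π, Real.exp (t * Real.cos (2 * α)) = π * I0 t := by
  have hcont : Continuous fun θ : ℝ => Real.exp (t * Real.cos θ) := by fun_prop
  have hreflect := intervalIntegral.integral_comp_sub_left (a := 0) (b := π)
    (fun θ => Real.exp (t * Real.cos θ)) (2 * π)
  simp only [Real.cos_two_pi_sub, sub_zero] at hreflect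
  rw [two_mul π, add_sub_cancel_right] at hreflect
  rw [intervalIntegral.integral_comp_mul_left (fun θ => Real.exp (t * Real.cos θ)) two_ne_zero,
    mul_zero, two_mul, ← intervalIntegral.integral_add_adjacent_intervals
      (hcont.intervalIntegrable 0 π) (hcont.intervalIntegrable π (π + π)), ← hreflect, I0,
    smul_eq_mul]
  have := Real.pi_pos
  field_simp
  ring

theorem integral_exp_mul_cos_two_mul_sub_mul_I (t u : ℝ) :
    ∫ α in (0 : ℝ)..π, Complex.exp (t * Complex.cos (2 * α - u * I)) = (π * I0 t : ℝ) := by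
  set f : ℂ → ℂ := fun ζ => Complex.exp (t * Complex.cos (2 * ζ)) with hf
  have hdiff : Differentiable ℂ f := by fun_prop
  have hperiodic (y : ℝ) : f (π + y * I) = f (y * I) := by
    rw [hf]
    dsimp only
    rw [mul_add, add_comm, Complex.cos_add_two_pi]
  have hreal (x : ℝ) : f x = (Real.exp (t * Real.cos (2 * x)) : ℝ) := by
    rw [hf]; push_cast; rfl
  have hshift (x : ℝ) : f (x + ((-u / 2 : ℝ) : ℂ) * I)
      = Complex.exp (t * Complex.cos (2 * x - u * I)) := by
    rw [hf]; push_cast; ring_nf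
  have hrect := Complex.integral_boundary_rect_eq_zero_of_differentiableOn f 0
    (π + ((-u / 2 : ℝ) : ℂ) * I) hdiff.differentiableOn
  simp only [Complex.zero_re, Complex.zero_im, Complex.add_re, Complex.add_im,
    Complex.re_ofReal_mul, Complex.im_ofReal_mul, Complex.ofReal_re, Complex.ofReal_im,
    Complex.I_re, Complex.I_im, mul_zero, mul_one, add_zero, zero_add, zero_mul,
    Complex.ofReal_zero, hperiodic, hreal, hshift, intervalIntegral.integral_ofReal,
    integral_exp_mul_cos_two_mul] at hrect
  linear_combination -hrect

theorem expISinh_two_mul_sin (t u α : ℝ) :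
    expISinh (2 * t * Real.sin α) (u + α * I)
      = (Real.exp (-(t * Real.cosh u)) : ℝ) * Complex.exp (t * Complex.cos (2 * α - u * I)) := by
  rw [expISinh, sinh_ofReal_add_ofReal_mul_I, Complex.ofReal_exp, ← Complex.exp_add,
    Complex.cos_sub, Complex.cos_mul_I, Complex.sin_mul_I, Complex.cos_two_mul, Complex.sin_two_mul]
  congr 1
  push_cast
  linear_combination (2 * t * Complex.sin α ^ 2 * Complex.cosh u) * Complex.I_sq
    - 2 * t * Complex.cosh u * Complex.sin_sq_add_cos_sq (α : ℂ)

theorem integral_comp_sin_zero_pi {f : ℝ → ℝ} (hf : Continuous f) :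
    ∫ α in 0..π, f (Real.sin α) = 2 * ∫ α in 0..(π / 2), f (Real.sin α) := by
  have hcont : Continuous fun α => f (Real.sin α) := hf.comp Real.continuous_sin
  have hreflect := intervalIntegral.integral_comp_sub_left (a := 0) (b := π / 2)
    (fun α => f (Real.sin α)) π
  simp only [Real.sin_pi_sub, sub_zero, sub_half] at hreflect
  rw [← intervalIntegral.integral_add_adjacent_intervals (hcont.intervalIntegrable 0 (π / 2))
    (hcont.intervalIntegrable (π / 2) π), ← hreflect, two_mul]

theorem integral_exp_neg_mul_sin_sq_le {c : ℝ} (hc : 0 < c) :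
    ∫ α in Ioc 0 π, Real.exp (-(c * Real.sin α ^ 2)) ≤ √(π / (c * (2 / π) ^ 2)) := by
  have hpi := Real.pi_pos
  have hb : 0 < c * (2 / π) ^ 2 := by positivity
  have hjordan (α : ℝ) (hα : α ∈ Ioc 0 (π / 2)) :
      Real.exp (-(c * Real.sin α ^ 2)) ≤ Real.exp (-(c * (2 / π) ^ 2) * α ^ 2) := by
    have hsin : (2 / π * α) ^ 2 ≤ Real.sin α ^ 2 :=
      pow_le_pow_left₀ (mul_nonneg (by positivity) hα.1.le) (Real.mul_le_sin hα.1.le hα.2) 2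
    rw [Real.exp_le_exp, neg_mul, neg_le_neg_iff, mul_assoc, ← mul_pow]
    exact mul_le_mul_of_nonneg_left hsin hc.le
  have hgauss := integrable_exp_neg_mul_sq hb
  rw [← intervalIntegral.integral_of_le hpi.le,
    integral_comp_sin_zero_pi (f := fun s => Real.exp (-(c * s ^ 2))) (by fun_prop),
    intervalIntegral.integral_of_le (by positivity)]
  calc 2 * ∫ α in Ioc 0 (π / 2), Real.exp (-(c * Real.sin α ^ 2))
      ≤ 2 * ∫ α in Ioc 0 (π / 2), Real.exp (-(c * (2 / π) ^ 2) * α ^ 2) :=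
        mul_le_mul_of_nonneg_left (setIntegral_mono_on (Continuous.integrableOn_Ioc (by fun_prop))
          hgauss.integrableOn measurableSet_Ioc hjordan) zero_le_two
    _ ≤ 2 * ∫ α in Ioi 0, Real.exp (-(c * (2 / π) ^ 2) * α ^ 2) :=
        mul_le_mul_of_nonneg_left (setIntegral_mono_set hgauss.integrableOn
          (ae_of_all _ fun _ => (Real.exp_pos _).le) Ioc_subset_Ioi_self.eventuallyLE) zero_le_two
    _ = √(π / (c * (2 / π) ^ 2)) := by rw [integral_gaussian_Ioi]; ring

theorem continuous_uncurry_expISinh_two_mul_sin (t : ℝ) :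
    Continuous (Function.uncurry fun α u : ℝ => expISinh (2 * t * Real.sin α) (u + α * I)) := by
  simp only [expISinh, Function.uncurry_def]
  fun_prop

theorem integrable_uncurry_expISinh_two_mul_sin {t : ℝ} (ht : 0 < t) :
    Integrable (Function.uncurry fun α u : ℝ => expISinh (2 * t * Real.sin α) (u + α * I))
      ((volume.restrict (Ioc 0 π)).prod volume) := by
  have hcont := continuous_uncurry_expISinh_two_mul_sin t
  rw [integrable_prod_iff' hcont.aestronglyMeasurable]
  refine ⟨ae_of_all _ fun u => (hcont.comp (Continuous.prodMk_left u)).integrableOn_Ioc, ?_⟩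
  refine (integrable_inv_sqrt_cosh.const_mul √(π / (2 * t * (2 / π) ^ 2))).mono'
    hcont.norm.aestronglyMeasurable.prod_swap.integral_prod_right' (ae_of_all _ fun u => ?_)
  have := Real.cosh_pos u
  have hnorm (α : ℝ) : ‖expISinh (2 * t * Real.sin α) (u + α * I)‖
      = Real.exp (-(2 * t * Real.cosh u * Real.sin α ^ 2)) := by
    rw [expISinh.norm_add_mul_I]; ring_nf
  simp only [Function.uncurry_apply_pair, hnorm]
  rw [Real.norm_of_nonneg (integral_nonneg fun _ => (Real.exp_pos _).le)]
  refine (integral_exp_neg_mul_sin_sq_le (by positivity)).trans_eq ?_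
  rw [← Real.sqrt_inv, ← Real.sqrt_mul (by positivity)]
  congr 1
  field_simp

-- Both `2 K₀(2t sin α)` and a multiple of `exp(-t cosh u) I₀(t)` are partial integrals of
-- `exp(2it sin α sinh(u + iα))`, over `u` and over `α` respectively.
theorem integral_K0_two_mul_sin {t : ℝ} (ht : 0 < t) :
    ∫ α in Ioc 0 π, K0 (2 * t * Real.sin α) = π * I0 t * K0 t := by
  have hline : ∫ α in Ioc 0 π, ∫ u : ℝ, expISinh (2 * t * Real.sin α) (u + α * I)
      = ∫ α in Ioc 0 π, ((2 * K0 (2 * t * Real.sin α) : ℝ) : ℂ) := by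
    rw [integral_Ioc_eq_integral_Ioo, integral_Ioc_eq_integral_Ioo]
    refine setIntegral_congr_fun measurableSet_Ioo fun α hα => ?_
    have hsin := Real.sin_pos_of_pos_of_lt_pi hα.1 hα.2
    exact expISinh.integral_add_mul_I (by positivity) hα.1 hα.2
  have hperiod (u : ℝ) : ∫ α in Ioc 0 π, expISinh (2 * t * Real.sin α) (u + α * I)
      = (Real.exp (-(t * Real.cosh u)) * (π * I0 t) : ℝ) := by
    simp_rw [expISinh_two_mul_sin]
    rw [integral_const_mul, ← intervalIntegral.integral_of_le Real.pi_pos.le,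
      integral_exp_mul_cos_two_mul_sub_mul_I, ← Complex.ofReal_mul]
  have hswap := integral_integral_swap (integrable_uncurry_expISinh_two_mul_sin ht)
  simp_rw [hline, hperiod] at hswap
  rw [integral_complex_ofReal, integral_complex_ofReal, Complex.ofReal_inj, integral_const_mul,
    integral_mul_const, integral_exp_neg_mul_cosh] at hswap
  linarith

/-! ### Boundary values of `besselHankel` -/

theorem besselStruve_eq_integral_Ioc (x : ℝ) :
    besselStruve x = (∫ α in Ioc 0 π, Real.exp (-(x * Real.sin α))) / 2 := by
  rw [← intervalIntegral.integral_of_le Real.pi_pos.le,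
    integral_comp_sin_zero_pi (f := fun s => Real.exp (-(x * s))) (by fun_prop), besselStruve]
  ring

section BoundaryValues

variable {t : ℝ}

theorem besselHankel.integrand_ofReal (ht : 0 < t) (v : ℝ) :
    sinhOscillatory (2 * t * Real.cosh v) * ((Real.cosh v)⁻¹ : ℝ)
      = 2 * t * (K0 (2 * t * Real.cosh v) + I * besselStruve (2 * t * Real.cosh v)) := by
  have hcosh := Real.cosh_pos v
  have hne : (Real.cosh v : ℂ) ≠ 0 := Complex.ofReal_ne_zero.2 hcosh.ne'
  have hval := sinhOscillatory_ofReal (x := 2 * t * Real.cosh v) (by positivity)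
  rw [Complex.ofReal_mul, Complex.ofReal_mul, Complex.ofReal_ofNat] at hval
  rw [hval, Complex.ofReal_inv]
  field_simp

theorem integrableOn_K0_add_I_mul_besselStruve (ht : 0 < t) :
    IntegrableOn (fun v : ℝ =>
      (K0 (2 * t * Real.cosh v) + I * besselStruve (2 * t * Real.cosh v) : ℂ)) (Ioi 0) := by
  have hint := besselHankel.integrableOn_integrand (z := t) (Complex.ofReal_im t).ge
  simp only [besselHankel.integrand_ofReal ht] at hint
  have htwo : (2 * t : ℂ) ≠ 0 := mul_ne_zero two_ne_zero (Complex.ofReal_ne_zero.2 ht.ne')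
  exact (integrable_const_mul_iff htwo.isUnit _).1 hint

theorem integrableOn_besselStruve_two_mul_cosh (ht : 0 < t) :
    IntegrableOn (fun v => besselStruve (2 * t * Real.cosh v)) (Ioi 0) := by
  simpa [IntegrableOn] using (integrableOn_K0_add_I_mul_besselStruve ht).im

theorem integrableOn_K0_two_mul_cosh (ht : 0 < t) :
    IntegrableOn (fun v => K0 (2 * t * Real.cosh v)) (Ioi 0) := by
  simpa [IntegrableOn] using (integrableOn_K0_add_I_mul_besselStruve ht).re

theorem integrable_uncurry_exp_neg_mul_cosh_mul_sin (ht : 0 < t) :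
    Integrable
      (Function.uncurry fun v α : ℝ => Real.exp (-(2 * t * Real.cosh v * Real.sin α)))
      ((volume.restrict (Ioi 0)).prod (volume.restrict (Ioc 0 π))) := by
  have hcont : Continuous
      (Function.uncurry fun v α : ℝ => Real.exp (-(2 * t * Real.cosh v * Real.sin α))) := by
    simp only [Function.uncurry_def]
    fun_prop
  rw [integrable_prod_iff hcont.aestronglyMeasurable]
  refine ⟨ae_of_all _ fun v => (hcont.comp (Continuous.prodMk_right v)).integrableOn_Ioc, ?_⟩
  refine ((integrableOn_besselStruve_two_mul_cosh ht).const_mul 2).congr (ae_of_all _ fun v => ?_)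
  simp only [besselStruve_eq_integral_Ioc, Function.uncurry_apply_pair,
    Real.norm_of_nonneg (Real.exp_pos _).le]
  ring

theorem integral_besselStruve_two_mul_cosh (ht : 0 < t) :
    ∫ v in Ioi (0 : ℝ), besselStruve (2 * t * Real.cosh v) = π * I0 t * K0 t / 2 := by
  have hswap := integral_integral_swap (integrable_uncurry_exp_neg_mul_cosh_mul_sin ht)
  have hK0 (α : ℝ) : ∫ v in Ioi (0 : ℝ), Real.exp (-(2 * t * Real.cosh v * Real.sin α))
      = K0 (2 * t * Real.sin α) := by
    rw [K0]; simp only [mul_right_comm]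
  simp_rw [hK0, integral_K0_two_mul_sin ht] at hswap
  simp_rw [besselStruve_eq_integral_Ioc, integral_div, hswap]

theorem besselHankel_ofReal (ht : 0 < t) :
    besselHankel t = ((t * K0 t ^ 2 : ℝ) : ℂ) + ((π * t * (I0 t * K0 t) : ℝ) : ℂ) * I := by
  have hK0 : IntegrableOn (fun v => (K0 (2 * t * Real.cosh v) : ℂ)) (Ioi 0) :=
    (integrableOn_K0_two_mul_cosh ht).ofReal
  have hstruve : IntegrableOn (fun v => (besselStruve (2 * t * Real.cosh v) : ℂ)) (Ioi 0) :=
    (integrableOn_besselStruve_two_mul_cosh ht).ofReal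
  simp only [besselHankel, besselHankel.integrand_ofReal ht]
  rw [integral_const_mul, integral_add hK0 (hstruve.const_mul I), integral_const_mul,
    integral_complex_ofReal, integral_complex_ofReal, integral_besselStruve_two_mul_cosh ht,
    K0_sq ht]
  push_cast
  ring

theorem besselHankel_ofReal_re (ht : 0 < t) : (besselHankel t).re = t * K0 t ^ 2 := by
  rw [besselHankel_ofReal ht, ← Complex.mk_eq_add_mul_I]

theorem besselHankel_ofReal_im (ht : 0 < t) :
    (besselHankel t).im = π * t * (I0 t * K0 t) := by
  rw [besselHankel_ofReal ht, ← Complex.mk_eq_add_mul_I]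

end BoundaryValues

theorem integral_re_sq_mul_im_besselHankel :
    ∫ t in Ioi (0 : ℝ), t ^ 2 * (besselHankel t).re ^ 2 * (besselHankel t).im
      = π * ∫ t in Ioi (0 : ℝ), I0 t * K0 t ^ 5 * t ^ 5 := by
  rw [← integral_const_mul]
  refine setIntegral_congr_fun measurableSet_Ioi fun t ht => ?_
  rw [besselHankel_ofReal_re ht, besselHankel_ofReal_im ht]
  ring

theorem integral_im_cube_sub_im_mul_besselHankel :
    ∫ t in Ioi (0 : ℝ), (t ^ 2 * (besselHankel t).im ^ 3
        - π ^ 2 * (besselHankel t).im * (t ^ 2 / 4 + 1 / 16))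
      = π ^ 3 * ∫ t in Ioi (0 : ℝ),
          I0 t * K0 t * (I0 t ^ 2 * K0 t ^ 2 - 1 / (4 * t ^ 2) - 1 / (16 * t ^ 4)) * t ^ 5 := by
  rw [← integral_const_mul]
  refine setIntegral_congr_fun measurableSet_Ioi fun t ht => ?_
  have hne : t ≠ 0 := (mem_Ioi.1 ht).ne'
  rw [besselHankel_ofReal_im ht]
  field_simp
  ring

theorem IKM155_alternative :
    (∫ t in Ioi (0:ℝ), I0 t * (K0 t)^5 * t^5)
    = (π^2/3) * ∫ t in Ioi (0:ℝ),
        I0 t * K0 t * ((I0 t)^2 * (K0 t)^2 - 1/(4*t^2) - 1/(16*t^4)) * t^5 := by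
  have hcontour := three_mul_integral_re_sq_mul_im_besselHankel
  rw [integral_re_sq_mul_im_besselHankel, integral_im_cube_sub_im_mul_besselHankel] at hcontour
  refine mul_left_cancel₀ (mul_ne_zero three_ne_zero Real.pi_ne_zero) ?_
  linear_combination hcontour
end

section
/- ∫₀^∞ I₀(t)[K₀(t)]⁵·t·(2 − 85t² + 72t⁴) dt = 0. -/
open Real MeasureTheory Set

/-!
Write `θ = t d/dt`. The functions `I₀` and `K₀` both satisfy `θ² f = t² f`, so the sums `E k` of
the products obtained from `I₀ K₀⁵` by applying `θ` to `k` of its six factors obey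
`θ (E k) = (k + 1) E (k + 1) + (7 - k) t² E (k - 1)`. Hence a suitable combination of the `E k`
with coefficients polynomial in `t` has derivative `-2 t (2 - 85 t² + 72 t⁴) I₀ K₀⁵`, and it
vanishes at both ends of `(0, ∞)`: at `0` because `K₀` is only logarithmically singular there, at
infinity because five factors `e^(-t)` beat one factor `e^t`.
-/

open Filter Topology Asymptotics ProbabilityTheory

section MixedEsymm

open Polynomial

variable {ι R : Type*}

/-- The mixed elementary symmetric function: the sum over the `k`-element subsets `A` of `s` of
`(∏ i ∈ A, g i) * ∏ i ∈ s \ A, f i`, encoded as a coefficient of `∏ i ∈ s, (g i X + f i)`. -/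
noncomputable def mixedEsymm [CommSemiring R] (s : Finset ι) (f g : ι → R) (k : ℕ) : R :=
  (∏ i ∈ s, (C (g i) * X + C (f i))).coeff k

section Algebra

variable [CommSemiring R] {s : Finset ι} (f g : ι → R)

lemma mixedEsymm_zero : mixedEsymm s f g 0 = ∏ i ∈ s, f i := by
  simp [mixedEsymm, coeff_zero_prod]

lemma mixedEsymm_card : mixedEsymm s f g s.card = ∏ i ∈ s, g i := by
  have h := coeff_prod_of_natDegree_le s (fun i => C (g i) * X + C (f i)) 1
    fun _ _ => natDegree_linear_le
  simpa [mixedEsymm] using h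

lemma mixedEsymm_eq_zero_of_card_lt {k : ℕ} (hk : s.card < k) : mixedEsymm s f g k = 0 := by
  have hdegree := (natDegree_prod_le s fun i => C (g i) * X + C (f i)).trans
    (Finset.sum_le_card_nsmul s _ 1 fun _ _ => natDegree_linear_le)
  exact coeff_eq_zero_of_natDegree_lt (hdegree.trans_lt (by simpa using hk))

variable [DecidableEq ι] {j : ι}

lemma mixedEsymm_insert_zero (hj : j ∉ s) :
    mixedEsymm (insert j s) f g 0 = f j * mixedEsymm s f g 0 := by
  simp only [mixedEsymm_zero, Finset.prod_insert hj]

lemma mixedEsymm_insert_succ (k : ℕ) (hj : j ∉ s) :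
    mixedEsymm (insert j s) f g (k + 1)
      = f j * mixedEsymm s f g (k + 1) + g j * mixedEsymm s f g k := by
  rw [add_comm (f j * _)]
  simp [mixedEsymm, Finset.prod_insert hj, add_mul, mul_assoc, coeff_X_mul]

end Algebra

section Analysis

variable {𝕜 : Type*} {s : Finset ι}

section Deriv

variable [NontriviallyNormedField 𝕜] {f g : ι → 𝕜 → 𝕜} {a b t : 𝕜}

lemma hasDerivAt_mixedEsymm_zero (hf : ∀ i ∈ s, HasDerivAt (f i) (a * g i t) t) :
    HasDerivAt (mixedEsymm s f g 0) (a * mixedEsymm s f g 1 t) t := by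
  classical
  induction s using Finset.induction_on with
  | empty =>
    have h : mixedEsymm ∅ f g 1 = 0 := mixedEsymm_eq_zero_of_card_lt f g (by simp)
    simpa [mixedEsymm_zero, h] using hasDerivAt_one t
  | insert j s hj ih =>
    rw [mixedEsymm_insert_zero f g hj, mixedEsymm_insert_succ f g 0 hj]
    refine ((hf j (s.mem_insert_self j)).mul
      (ih fun i hi => hf i (Finset.mem_insert_of_mem hi))).congr_deriv ?_
    simp only [Pi.add_apply, Pi.mul_apply]
    ring

lemma hasDerivAt_mixedEsymm_succ (hf : ∀ i ∈ s, HasDerivAt (f i) (a * g i t) t)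
    (hg : ∀ i ∈ s, HasDerivAt (g i) (b * f i t) t) (k : ℕ) :
    HasDerivAt (mixedEsymm s f g (k + 1))
      (a * (k + 2) * mixedEsymm s f g (k + 2) t + b * (s.card - k) * mixedEsymm s f g k t) t := by
  classical
  induction s using Finset.induction_on generalizing k with
  | empty =>
    have h (m : ℕ) : mixedEsymm ∅ f g (m + 1) = 0 := mixedEsymm_eq_zero_of_card_lt f g (by simp)
    cases k <;> simp [h]
  | insert j s hj ih =>
    have hfs := fun i hi => hf i (Finset.mem_insert_of_mem hi)
    have hgs := fun i hi => hg i (Finset.mem_insert_of_mem hi)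
    have hfj := hf j (s.mem_insert_self j)
    have hgj := hg j (s.mem_insert_self j)
    have ih := ih hfs hgs
    cases k with
    | zero =>
      simp only [mixedEsymm_insert_succ f g _ hj, mixedEsymm_insert_zero f g hj]
      refine ((hfj.mul (ih 0)).add
        (hgj.mul (hasDerivAt_mixedEsymm_zero hfs))).congr_deriv ?_
      simp only [Pi.add_apply, Pi.mul_apply, Finset.card_insert_of_notMem hj]
      push_cast
      ring
    | succ k =>
      simp only [mixedEsymm_insert_succ f g _ hj]
      refine ((hfj.mul (ih (k + 1))).add (hgj.mul (ih k))).congr_deriv ?_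
      simp only [Pi.add_apply, Pi.mul_apply, Finset.card_insert_of_notMem hj]
      push_cast
      ring

end Deriv

lemma mixedEsymm_isBigO {α : Type*} [NormedField 𝕜] {l : Filter α} {f g b : ι → α → 𝕜}
    (hf : ∀ i ∈ s, f i =O[l] b i) (hg : ∀ i ∈ s, g i =O[l] b i) (k : ℕ) :
    mixedEsymm s f g k =O[l] fun t => ∏ i ∈ s, b i t := by
  classical
  induction s using Finset.induction_on generalizing k with
  | empty =>
    cases k with
    | zero => simpa [mixedEsymm_zero] using isBigO_refl (fun _ : α => (1 : 𝕜)) l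
    | succ k =>
      rw [mixedEsymm_eq_zero_of_card_lt f g (by simp)]
      exact isBigO_zero _ _
  | insert j s hj ih =>
    have ih := ih (fun i hi => hf i (Finset.mem_insert_of_mem hi))
      fun i hi => hg i (Finset.mem_insert_of_mem hi)
    have hfj := hf j (s.mem_insert_self j)
    have hgj := hg j (s.mem_insert_self j)
    simp only [Finset.prod_insert hj]
    cases k with
    | zero =>
      rw [mixedEsymm_insert_zero f g hj]
      exact hfj.mul (ih 0)
    | succ k =>
      rw [mixedEsymm_insert_succ f g k hj]
      exact (hfj.mul (ih (k + 1))).add (hgj.mul (ih k))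

end Analysis

end MixedEsymm

/-- With `E k` the mixed symmetric functions of six solutions `f i` of `θ² f = t² f` and of
`g i = θ f i`, where `θ = t d/dt`, a primitive of `-2 t (2 - 85 t² + 72 t⁴) ∏ i, f i`. The
coefficients are chosen so that `E 1`, …, `E 5` cancel in the derivative. -/
noncomputable def sumRulePrimitive (E : ℕ → ℝ → ℝ) (t : ℝ) : ℝ :=
  15 * E 6 t - 3 * (t ^ 2 * E 4 t) + 3 / 2 * (t ^ 2 * E 3 t)
    + (3 * (t ^ 4 * E 2 t) - t ^ 2 * E 2 t) + (t ^ 2 * E 1 t - 9 * (t ^ 4 * E 1 t))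
    + (41 * (t ^ 4 * E 0 t) - 2 * (t ^ 2 * E 0 t) - 15 * (t ^ 6 * E 0 t))

lemma hasDerivAt_sumRulePrimitive {ι : Type*} {s : Finset ι} (hs : s.card = 6)
    {f g : ι → ℝ → ℝ} {t : ℝ} (ht : t ≠ 0) (hf : ∀ i ∈ s, HasDerivAt (f i) (t⁻¹ * g i t) t)
    (hg : ∀ i ∈ s, HasDerivAt (g i) (t * f i t) t) :
    HasDerivAt (sumRulePrimitive (mixedEsymm s f g))
      (-2 * ((∏ i ∈ s, f i t) * t * (2 - 85 * t ^ 2 + 72 * t ^ 4))) t := by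
  have hE0 := hasDerivAt_mixedEsymm_zero hf
  have hE (k : ℕ) := hasDerivAt_mixedEsymm_succ hf hg k
  have hpow (n : ℕ) := hasDerivAt_pow n t
  have hE7 : mixedEsymm s f g 7 = 0 := mixedEsymm_eq_zero_of_card_lt f g (by omega)
  have hprod : mixedEsymm s f g 0 t = ∏ i ∈ s, f i t := by
    rw [mixedEsymm_zero, Finset.prod_apply]
  have hderiv := ((((((hE 5).const_mul 15).sub (((hpow 2).mul (hE 3)).const_mul 3)).add
    (((hpow 2).mul (hE 2)).const_mul (3 / 2))).add
    ((((hpow 4).mul (hE 1)).const_mul 3).sub ((hpow 2).mul (hE 1)))).add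
    (((hpow 2).mul (hE 0)).sub (((hpow 4).mul (hE 0)).const_mul 9))).add
    (((((hpow 4).mul hE0).const_mul 41).sub (((hpow 2).mul hE0).const_mul 2)).sub
      (((hpow 6).mul hE0).const_mul 15))
  refine hderiv.congr_deriv ?_
  rw [← hprod, hE7, hs]
  simp only [Pi.zero_apply]
  push_cast
  field_simp
  ring

lemma tendsto_sumRulePrimitive {E : ℕ → ℝ → ℝ} {l : Filter ℝ} (h6 : Tendsto (E 6) l (𝓝 0))
    (hE : ∀ n ≠ 0, ∀ k, Tendsto (fun t => t ^ n * E k t) l (𝓝 0)) :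
    Tendsto (sumRulePrimitive E) l (𝓝 0) := by
  have h2 := hE 2 (by norm_num)
  have h4 := hE 4 (by norm_num)
  have h6' := hE 6 (by norm_num)
  have h : Tendsto (sumRulePrimitive E) l (𝓝 _) :=
    (((((h6.const_mul 15).sub ((h2 4).const_mul 3)).add ((h2 3).const_mul (3 / 2))).add
      (((h4 2).const_mul 3).sub (h2 2))).add ((h2 1).sub ((h4 1).const_mul 9))).add
      ((((h4 0).const_mul 41).sub ((h2 0).const_mul 2)).sub ((h6' 0).const_mul 15))
  simpa only [mul_zero, sub_zero, add_zero] using h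

section BesselI

/-- `π⁻¹ ∫₀^π cosᵏ θ exp(t cos θ) dθ`, the `k`-th derivative of `I₀`. -/
noncomputable def besselIMoment (k : ℕ) (t : ℝ) : ℝ :=
  (1 / π) * ∫ θ in (0:ℝ)..π, cos θ ^ k * exp (t * cos θ)

lemma besselIMoment_zero : besselIMoment 0 = I0 := by
  funext t
  simp [besselIMoment, I0]

lemma integrableExpSet_cos : integrableExpSet cos (volume.restrict (Ioc 0 π)) = univ :=
  eq_univ_of_forall fun t =>
    (show Continuous fun θ => exp (t * cos θ) by fun_prop).integrableOn_Ioc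

lemma hasDerivAt_besselIMoment (k : ℕ) (t : ℝ) :
    HasDerivAt (besselIMoment k) (besselIMoment (k + 1) t) t := by
  have h := hasDerivAt_integral_pow_mul_exp_real (X := cos) (μ := volume.restrict (Ioc 0 π))
    (t := t) (by simp [integrableExpSet_cos]) k
  unfold besselIMoment
  simpa only [intervalIntegral.integral_of_le pi_pos.le] using h.const_mul (1 / π)

lemma besselIMoment_one (t : ℝ) :
    besselIMoment 1 t = t * (besselIMoment 0 t - besselIMoment 2 t) := by
  have hint (k : ℕ) : IntervalIntegrable (fun θ => cos θ ^ k * exp (t * cos θ)) volume 0 π :=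
    (show Continuous fun θ => cos θ ^ k * exp (t * cos θ) by fun_prop).intervalIntegrable _ _
  have hderiv (θ : ℝ) : HasDerivAt (fun θ => sin θ * exp (t * cos θ))
      (cos θ ^ 1 * exp (t * cos θ)
        - t * (cos θ ^ 0 * exp (t * cos θ) - cos θ ^ 2 * exp (t * cos θ))) θ := by
    refine ((hasDerivAt_sin θ).mul ((hasDerivAt_cos θ).const_mul t).exp).congr_deriv ?_
    linear_combination (-t * exp (t * cos θ)) * sin_sq θ
  have hzero := intervalIntegral.integral_eq_sub_of_hasDerivAt (fun θ _ => hderiv θ)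
    ((hint 1).sub (((hint 0).sub (hint 2)).const_mul t))
  rw [intervalIntegral.integral_sub (hint 1) (((hint 0).sub (hint 2)).const_mul t),
    intervalIntegral.integral_const_mul, intervalIntegral.integral_sub (hint 0) (hint 2),
    sin_pi, sin_zero] at hzero
  unfold besselIMoment
  linear_combination (1 / π) * hzero

lemma hasDerivAt_mul_besselIMoment_one (t : ℝ) :
    HasDerivAt (fun t => t * besselIMoment 1 t) (t * I0 t) t := by
  refine ((hasDerivAt_id' t).mul (hasDerivAt_besselIMoment 1 t)).congr_deriv ?_
  rw [← besselIMoment_zero]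
  linear_combination besselIMoment_one t

lemma abs_besselIMoment_le (k : ℕ) (t : ℝ) : |besselIMoment k t| ≤ exp |t| := by
  have hbound : ∀ θ ∈ uIoc 0 π, ‖cos θ ^ k * exp (t * cos θ)‖ ≤ exp |t| := fun θ _ => by
    have hpow : |cos θ| ^ k ≤ 1 := pow_le_one₀ (abs_nonneg _) (abs_cos_le_one θ)
    have hmul : t * cos θ ≤ |t| := by
      calc t * cos θ ≤ |t| * |cos θ| := (le_abs_self _).trans_eq (abs_mul _ _)
        _ ≤ |t| := mul_le_of_le_one_right (abs_nonneg t) (abs_cos_le_one θ)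
    rw [norm_mul, norm_pow, norm_eq_abs, norm_eq_abs, abs_exp]
    calc |cos θ| ^ k * exp (t * cos θ) ≤ 1 * exp |t| := by gcongr
      _ = exp |t| := one_mul _
  have hint := intervalIntegral.norm_integral_le_of_norm_le_const hbound
  rw [sub_zero, abs_of_pos pi_pos, norm_eq_abs] at hint
  rw [besselIMoment, abs_mul, abs_of_pos (by positivity : 0 < 1 / π)]
  calc 1 / π * |∫ θ in (0:ℝ)..π, cos θ ^ k * exp (t * cos θ)| ≤ 1 / π * (exp |t| * π) := by gcongr
    _ = exp |t| := by field_simp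

lemma besselIMoment_isBigO_exp (k : ℕ) : besselIMoment k =O[𝓟 (Ioi 0)] exp :=
  isBigO_principal.2 ⟨1, fun t (ht : 0 < t) => by
    simpa [abs_of_pos ht] using abs_besselIMoment_le k t⟩

end BesselI

section BesselK

/-- `∫₀^∞ coshᵏ u exp(-t cosh u) du`, which is `(-1)ᵏ` times the `k`-th derivative of `K₀`. -/
noncomputable def besselKMoment (k : ℕ) (t : ℝ) : ℝ :=
  ∫ u in Ioi (0:ℝ), cosh u ^ k * exp (-(t * cosh u))

lemma besselKMoment_zero : besselKMoment 0 = K0 := by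
  funext t
  simp [besselKMoment, K0]

lemma pow_mul_exp_neg_le_rpow_neg_mul_exp (k : ℕ) {s x : ℝ} (hs : 0 < s) (hx : 0 < x) :
    x ^ k * exp (-x) ≤ (2 * (k + s)) ^ (k + s) * (x ^ (-s) * exp (-(x / 2))) := by
  have hrpow : x ^ (k + s) ≤ (2 * (k + s)) ^ (k + s) * exp (x / 2) := by
    have hle : x ≤ 2 * (k + s) * exp (x / (2 * (k + s))) := by
      have := (lt_add_one _).le.trans (add_one_le_exp (x / (2 * (k + s))))
      rwa [div_le_iff₀' (by positivity)] at this
    calc x ^ (k + s) ≤ (2 * (k + s) * exp (x / (2 * (k + s)))) ^ (k + s) := by gcongr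
      _ = (2 * (k + s)) ^ (k + s) * exp (x / 2) := by
        rw [mul_rpow (by positivity) (exp_nonneg _), ← exp_mul]
        congr 2
        field_simp
  calc x ^ k * exp (-x) = x ^ (k + s) * (x ^ (-s) * exp (-x)) := by
        rw [← mul_assoc, ← rpow_add hx, add_neg_cancel_right, rpow_natCast]
    _ ≤ (2 * (k + s)) ^ (k + s) * exp (x / 2) * (x ^ (-s) * exp (-x)) := by gcongr
    _ = (2 * (k + s)) ^ (k + s) * (x ^ (-s) * exp (x / 2 + -x)) := by rw [exp_add]; ring
    _ = (2 * (k + s)) ^ (k + s) * (x ^ (-s) * exp (-(x / 2))) := by ring_nf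

lemma integrableOn_cosh_rpow_neg {s : ℝ} (hs : 0 < s) :
    IntegrableOn (fun u => cosh u ^ (-s)) (Ioi 0) := by
  have hcont : Continuous fun u => cosh u ^ (-s) :=
    Real.continuous_cosh.rpow_const fun u => Or.inl (Real.cosh_pos u).ne'
  refine ((exp_neg_integrableOn_Ioi 0 hs).const_mul (2 ^ s)).mono' hcont.aestronglyMeasurable
    (Eventually.of_forall fun u => ?_)
  have hcosh : exp u / 2 ≤ cosh u := by
    rw [Real.cosh_eq]
    linarith [exp_pos (-u)]
  rw [norm_of_nonneg (rpow_nonneg (Real.cosh_pos u).le _)]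
  calc cosh u ^ (-s) ≤ (exp u / 2) ^ (-s) :=
        rpow_le_rpow_of_nonpos (by positivity) hcosh (by linarith)
    _ = 2 ^ s * exp (-s * u) := by
        rw [div_rpow (exp_nonneg u) zero_le_two, ← exp_mul, rpow_neg zero_le_two, div_inv_eq_mul,
          mul_comm, mul_comm u]

lemma mul_cosh_pow_mul_exp_neg_le (k : ℕ) {s t : ℝ} (hs : 0 < s) (ht : 0 < t) (u : ℝ) :
    (t * cosh u) ^ k * exp (-(t * cosh u))
      ≤ (2 * (k + s)) ^ (k + s) * (t ^ (-s) * exp (-(t / 2))) * cosh u ^ (-s) := by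
  have hcosh := Real.cosh_pos u
  have hexp : t / 2 ≤ t * cosh u / 2 := by
    have := le_mul_of_one_le_right ht.le (Real.one_le_cosh u)
    linarith
  calc (t * cosh u) ^ k * exp (-(t * cosh u))
      ≤ (2 * (k + s)) ^ (k + s) * ((t * cosh u) ^ (-s) * exp (-(t * cosh u / 2))) :=
        pow_mul_exp_neg_le_rpow_neg_mul_exp k hs (by positivity)
    _ ≤ (2 * (k + s)) ^ (k + s) * ((t * cosh u) ^ (-s) * exp (-(t / 2))) := by gcongr
    _ = _ := by rw [mul_rpow ht.le hcosh.le]; ring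

lemma Ioi_subset_integrableExpSet_neg_cosh :
    Ioi 0 ⊆ integrableExpSet (fun u => -cosh u) (volume.restrict (Ioi 0)) := by
  intro t (ht : 0 < t)
  refine ((integrableOn_cosh_rpow_neg one_pos).const_mul
    ((2 * ((0 : ℕ) + 1)) ^ ((0 : ℕ) + 1 : ℝ) * (t ^ (-1 : ℝ) * exp (-(t / 2))))).mono'
    (Continuous.aestronglyMeasurable (by fun_prop)) (Eventually.of_forall fun u => ?_)
  simpa using mul_cosh_pow_mul_exp_neg_le 0 one_pos ht u

lemma mem_interior_integrableExpSet_neg_cosh {t : ℝ} (ht : 0 < t) :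
    t ∈ interior (integrableExpSet (fun u => -cosh u) (volume.restrict (Ioi 0))) :=
  isOpen_Ioi.subset_interior_iff.2 Ioi_subset_integrableExpSet_neg_cosh ht

lemma neg_one_pow_mul_besselKMoment (k : ℕ) (t : ℝ) :
    (-1) ^ k * besselKMoment k t
      = ∫ u in Ioi (0:ℝ), (-cosh u) ^ k * exp (t * -cosh u) := by
  simp only [besselKMoment, ← integral_const_mul, neg_pow (cosh _), mul_neg, mul_assoc]

lemma integrableOn_cosh_pow_mul_exp_neg (k : ℕ) {t : ℝ} (ht : 0 < t) :
    IntegrableOn (fun u => cosh u ^ k * exp (-(t * cosh u))) (Ioi 0) := by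
  have h := integrable_pow_mul_exp_of_mem_interior_integrableExpSet
    (mem_interior_integrableExpSet_neg_cosh ht) k
  refine (h.const_mul ((-1) ^ k)).congr (Eventually.of_forall fun u => ?_)
  beta_reduce
  rw [← mul_assoc, ← mul_pow, neg_one_mul, neg_neg, mul_neg]

lemma hasDerivAt_besselKMoment (k : ℕ) {t : ℝ} (ht : 0 < t) :
    HasDerivAt (besselKMoment k) (-besselKMoment (k + 1) t) t := by
  have h := hasDerivAt_integral_pow_mul_exp_real (mem_interior_integrableExpSet_neg_cosh ht) k
  simp only [← neg_one_pow_mul_besselKMoment] at h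
  have hsq : ((-1 : ℝ) ^ k) * (-1) ^ k = 1 := by rw [← mul_pow]; simp
  refine ((h.const_mul ((-1) ^ k)).congr_deriv ?_).congr_of_eventuallyEq
    (Eventually.of_forall fun x => ?_)
  · linear_combination -besselKMoment (k + 1) t * hsq
  · linear_combination -besselKMoment k x * hsq

lemma integrableOn_sinh_mul_exp_neg {t : ℝ} (ht : 0 < t) :
    IntegrableOn (fun u => sinh u * exp (-(t * cosh u))) (Ioi 0) := by
  refine (integrableOn_cosh_pow_mul_exp_neg 1 ht).mono'
    (Continuous.aestronglyMeasurable (by fun_prop)) (Eventually.of_forall fun u => ?_)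
  rw [norm_mul, norm_eq_abs, norm_eq_abs, abs_exp, pow_one, Real.abs_sinh, ← Real.cosh_abs u]
  gcongr
  exact (Real.sinh_lt_cosh _).le

lemma besselKMoment_one {t : ℝ} (ht : 0 < t) :
    besselKMoment 1 t = t * (besselKMoment 2 t - besselKMoment 0 t) := by
  have hint (k : ℕ) := integrableOn_cosh_pow_mul_exp_neg k ht
  have hderiv (u : ℝ) : HasDerivAt (fun u => sinh u * exp (-(t * cosh u)))
      (cosh u ^ 1 * exp (-(t * cosh u)) - t * (cosh u ^ 2 *
        exp (-(t * cosh u)) - cosh u ^ 0 * exp (-(t * cosh u)))) u := by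
    refine ((Real.hasDerivAt_sinh u).mul
      ((Real.hasDerivAt_cosh u).const_mul t).neg.exp).congr_deriv ?_
    simp only [Pi.neg_apply]
    linear_combination (-t * exp (-(t * cosh u))) * Real.sinh_sq u
  have hsub := ((hint 2).fun_sub (hint 0)).const_mul t
  have hderiv_int := (hint 1).fun_sub hsub
  have hlim := tendsto_zero_of_hasDerivAt_of_integrableOn_Ioi (fun u _ => hderiv u) hderiv_int
    (integrableOn_sinh_mul_exp_neg ht)
  have hzero := integral_Ioi_of_hasDerivAt_of_tendsto' (fun u _ => hderiv u) hderiv_int hlim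
  rw [integral_sub (hint 1) hsub, integral_const_mul, integral_sub (hint 2) (hint 0),
    Real.sinh_zero] at hzero
  unfold besselKMoment
  linear_combination hzero

lemma hasDerivAt_neg_mul_besselKMoment_one {t : ℝ} (ht : 0 < t) :
    HasDerivAt (fun t => -(t * besselKMoment 1 t)) (t * K0 t) t := by
  refine ((hasDerivAt_id' t).mul (hasDerivAt_besselKMoment 1 ht)).neg.congr_deriv ?_
  rw [← besselKMoment_zero]
  linear_combination -besselKMoment_one ht

lemma pow_mul_besselKMoment_isBigO (k : ℕ) {s : ℝ} (hs : 0 < s) :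
    (fun t => t ^ k * besselKMoment k t) =O[𝓟 (Ioi 0)] fun t => t ^ (-s) * exp (-(t / 2)) := by
  refine isBigO_principal.2 ⟨(2 * (k + s)) ^ (k + s) * ∫ u in Ioi (0:ℝ), cosh u ^ (-s),
    fun t (ht : 0 < t) => ?_⟩
  rw [norm_of_nonneg (by positivity : 0 ≤ t ^ (-s) * exp (-(t / 2))), mul_right_comm,
    besselKMoment, ← integral_const_mul, ← integral_const_mul]
  refine norm_integral_le_of_norm_le ((integrableOn_cosh_rpow_neg hs).const_mul _)
    (Eventually.of_forall fun u => ?_)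
  rw [norm_of_nonneg (by positivity), ← mul_assoc, ← mul_pow]
  exact mul_cosh_pow_mul_exp_neg_le k hs ht u

end BesselK

section Envelope

variable {h : ℝ → ℝ} {r b : ℝ}

lemma tendsto_nhdsGT_zero_of_isBigO_rpow_mul_exp (hr : 0 < r)
    (hh : h =O[𝓟 (Ioi 0)] fun t => t ^ r * exp (-b * t)) : Tendsto h (𝓝[>] 0) (𝓝 0) := by
  have hcont : ContinuousAt (fun t : ℝ => t ^ r * exp (-b * t)) 0 :=
    (continuousAt_rpow_const _ _ (Or.inr hr.le)).mul (by fun_prop)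
  have hlim := hcont.tendsto
  rw [zero_rpow hr.ne', zero_mul] at hlim
  exact (hh.mono inf_le_right).trans_tendsto (hlim.mono_left nhdsWithin_le_nhds)

lemma tendsto_atTop_zero_of_isBigO_rpow_mul_exp (hb : 0 < b)
    (hh : h =O[𝓟 (Ioi 0)] fun t => t ^ r * exp (-b * t)) : Tendsto h atTop (𝓝 0) :=
  (hh.mono (le_principal_iff.2 (Ioi_mem_atTop 0))).trans_tendsto
    (tendsto_rpow_mul_exp_neg_mul_atTop_nhds_zero r b hb)

lemma integrableOn_Ioi_of_isBigO_rpow_mul_exp (hr : -1 < r) (hb : 0 < b)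
    (hcont : ContinuousOn h (Ioi 0)) (hh : h =O[𝓟 (Ioi 0)] fun t => t ^ r * exp (-b * t)) :
    IntegrableOn h (Ioi 0) := by
  obtain ⟨c, hc⟩ := isBigO_principal.1 hh
  have henv : IntegrableOn (fun t : ℝ => t ^ r * exp (-b * t)) (Ioi 0) := by
    simpa only [rpow_one] using integrableOn_rpow_mul_exp_neg_mul_rpow hr one_pos hb
  exact (henv.norm.const_mul c).mono' (hcont.aestronglyMeasurable measurableSet_Ioi)
    ((ae_restrict_mem measurableSet_Ioi).mono hc)

end Envelope

lemma integral_Ioi_of_hasDerivAt_of_tendsto_nhdsGT {f f' : ℝ → ℝ} {a m n : ℝ}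
    (hderiv : ∀ x ∈ Ioi a, HasDerivAt f (f' x) x) (hint : IntegrableOn f' (Ioi a))
    (ha : Tendsto f (𝓝[>] a) (𝓝 m)) (htop : Tendsto f atTop (𝓝 n)) :
    ∫ x in Ioi a, f' x = n - m := by
  simpa using integral_Ioi_deriv_mul_eq_sub (v := fun _ => 1) (v' := fun _ => 0) hderiv
    (fun x _ => hasDerivAt_const x 1) (hint.congr_fun (fun x _ => by simp) measurableSet_Ioi)
    (ha.congr fun x => by simp) (htop.congr fun x => by simp)

section Product

/-- The six factors of `I₀ K₀⁵`. -/
noncomputable def besselFactor : Fin 6 → ℝ → ℝ :=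
  Fin.cons I0 fun _ => K0

/-- The images of the six factors of `I₀ K₀⁵` under `θ = t d/dt`. -/
noncomputable def eulerBesselFactor : Fin 6 → ℝ → ℝ :=
  Fin.cons (fun t => t * besselIMoment 1 t) fun _ t => -(t * besselKMoment 1 t)

lemma prod_besselFactor (t : ℝ) : ∏ i, besselFactor i t = I0 t * K0 t ^ 5 := by
  simp [Fin.prod_univ_succ, besselFactor]

lemma hasDerivAt_besselFactor {t : ℝ} (ht : 0 < t) (i : Fin 6) :
    HasDerivAt (besselFactor i) (t⁻¹ * eulerBesselFactor i t) t := by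
  refine Fin.cases ?_ (fun _ => ?_) i
  · simpa [besselFactor, eulerBesselFactor, ht.ne', besselIMoment_zero]
      using hasDerivAt_besselIMoment 0 t
  · simpa [besselFactor, eulerBesselFactor, ht.ne', besselKMoment_zero]
      using hasDerivAt_besselKMoment 0 ht

lemma hasDerivAt_eulerBesselFactor {t : ℝ} (ht : 0 < t) (i : Fin 6) :
    HasDerivAt (eulerBesselFactor i) (t * besselFactor i t) t :=
  Fin.cases (hasDerivAt_mul_besselIMoment_one t)
    (fun _ => hasDerivAt_neg_mul_besselKMoment_one ht) i

/-- Common bounds, up to constants, for the entries of `besselFactor` and `eulerBesselFactor`.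
Any exponent in `(-1/5, 0)` in place of `-1/10` would serve as well: `K₀` is unbounded at `0`, and
five factors together may lose less than one power of `t`. -/
noncomputable def besselEnvelope : Fin 6 → ℝ → ℝ :=
  Fin.cons (fun t => exp (2 * t)) fun _ t => t ^ (-(1 / 10) : ℝ) * exp (-(t / 2))

lemma prod_besselEnvelope {t : ℝ} (ht : 0 < t) :
    ∏ i, besselEnvelope i t = t ^ (-(1 / 2) : ℝ) * exp (-(1 / 2) * t) := by
  have hrpow : (t ^ (-(1 / 10) : ℝ)) ^ 5 = t ^ (-(1 / 2) : ℝ) := by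
    rw [← rpow_mul_natCast ht.le]
    norm_num
  have hexp : exp (2 * t) * exp (-(t / 2)) ^ 5 = exp (-(1 / 2) * t) := by
    rw [← exp_nat_mul, ← exp_add]
    congr 1
    push_cast
    ring
  calc ∏ i, besselEnvelope i t
      = exp (2 * t) * (t ^ (-(1 / 10) : ℝ) * exp (-(t / 2))) ^ 5 := by
        simp [Fin.prod_univ_succ, besselEnvelope]
    _ = (t ^ (-(1 / 10) : ℝ)) ^ 5 * (exp (2 * t) * exp (-(t / 2)) ^ 5) := by ring
    _ = t ^ (-(1 / 2) : ℝ) * exp (-(1 / 2) * t) := by rw [hrpow, hexp]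

lemma exp_isBigO_exp_two_mul : exp =O[𝓟 (Ioi 0)] fun t => exp (2 * t) :=
  isBigO_principal.2 ⟨1, fun t (ht : 0 < t) => by
    rw [one_mul, norm_of_nonneg (exp_nonneg _), norm_of_nonneg (exp_nonneg _), exp_le_exp]
    linarith⟩

lemma mul_besselIMoment_isBigO (k : ℕ) :
    (fun t => t * besselIMoment k t) =O[𝓟 (Ioi 0)] fun t => exp (2 * t) := by
  have hid : (fun t : ℝ => t) =O[𝓟 (Ioi 0)] exp :=
    isBigO_principal.2 ⟨1, fun t (ht : 0 < t) => by
      rw [one_mul, norm_of_nonneg ht.le, norm_of_nonneg (exp_nonneg _)]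
      linarith [add_one_le_exp t]⟩
  refine (hid.mul (besselIMoment_isBigO_exp k)).congr_right fun t => ?_
  rw [← exp_add, two_mul]

lemma besselFactor_isBigO (i : Fin 6) : besselFactor i =O[𝓟 (Ioi 0)] besselEnvelope i := by
  refine Fin.cases ?_ (fun _ => ?_) i
  · rw [besselFactor, Fin.cons_zero, ← besselIMoment_zero]
    exact (besselIMoment_isBigO_exp 0).trans exp_isBigO_exp_two_mul
  · have hK := pow_mul_besselKMoment_isBigO 0 (s := 1 / 10) (by norm_num)
    simpa [besselFactor, besselEnvelope, besselKMoment_zero] using hK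

lemma eulerBesselFactor_succ_isBigO (i : Fin 5) :
    eulerBesselFactor i.succ =O[𝓟 (Ioi 0)] besselEnvelope i.succ := by
  have hK := pow_mul_besselKMoment_isBigO 1 (s := 1 / 10) (by norm_num)
  simpa [eulerBesselFactor, besselEnvelope] using hK.neg_left

lemma eulerBesselFactor_isBigO (i : Fin 6) :
    eulerBesselFactor i =O[𝓟 (Ioi 0)] besselEnvelope i :=
  Fin.cases (mul_besselIMoment_isBigO 1) eulerBesselFactor_succ_isBigO i

/-- `besselEsymm k` is the sum of the products obtained from `I₀ K₀⁵` by applying `θ = t d/dt` to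
`k` of the six factors. -/
noncomputable def besselEsymm : ℕ → ℝ → ℝ :=
  mixedEsymm Finset.univ besselFactor eulerBesselFactor

lemma besselEsymm_zero (t : ℝ) : besselEsymm 0 t = I0 t * K0 t ^ 5 := by
  rw [besselEsymm, mixedEsymm_zero, Finset.prod_apply, prod_besselFactor]

lemma besselEsymm_six : besselEsymm 6 = ∏ i, eulerBesselFactor i :=
  mixedEsymm_card besselFactor eulerBesselFactor

lemma pow_mul_besselEsymm_isBigO (n k : ℕ) :
    (fun t => t ^ n * besselEsymm k t)
      =O[𝓟 (Ioi 0)] fun t => t ^ (n - 1 / 2 : ℝ) * exp (-(1 / 2) * t) := by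
  have h := (isBigO_refl (fun t : ℝ => t ^ n) (𝓟 (Ioi 0))).mul
    (mixedEsymm_isBigO (s := Finset.univ) (fun i _ => besselFactor_isBigO i)
      (fun i _ => eulerBesselFactor_isBigO i) k)
  refine h.congr' EventuallyEq.rfl (eventually_principal.2 fun t (ht : 0 < t) => ?_)
  beta_reduce
  rw [prod_besselEnvelope ht, ← mul_assoc, ← rpow_natCast, ← rpow_add ht, sub_eq_add_neg]

lemma besselEsymm_six_isBigO :
    besselEsymm 6 =O[𝓟 (Ioi 0)] fun t => t ^ (1 / 2 : ℝ) * exp (-(1 / 2) * t) := by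
  have hI := (isBigO_refl (fun t : ℝ => t) (𝓟 (Ioi 0))).mul
    ((besselIMoment_isBigO_exp 1).trans exp_isBigO_exp_two_mul)
  have hK := IsBigO.finsetProd (s := Finset.univ) fun i _ => eulerBesselFactor_succ_isBigO i
  have h := hI.mul hK
  refine h.congr' (Eventually.of_forall fun t => ?_)
    (eventually_principal.2 fun t (ht : 0 < t) => ?_)
  · rw [besselEsymm_six, Finset.prod_apply, Fin.prod_univ_succ]
    rfl
  · have hprod := prod_besselEnvelope ht
    have hrpow : t ^ (1 / 2 : ℝ) = t * t ^ (-(1 / 2) : ℝ) := by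
      rw [← rpow_one_add' ht.le (by norm_num)]
      norm_num
    rw [Fin.prod_univ_succ] at hprod
    beta_reduce
    rw [hrpow, mul_assoc, mul_assoc, ← hprod]
    rfl

lemma tendsto_sumRulePrimitive_besselEsymm_nhdsGT_zero :
    Tendsto (sumRulePrimitive besselEsymm) (𝓝[>] 0) (𝓝 0) := by
  refine tendsto_sumRulePrimitive
    (tendsto_nhdsGT_zero_of_isBigO_rpow_mul_exp (by norm_num) besselEsymm_six_isBigO)
    fun n hn k => tendsto_nhdsGT_zero_of_isBigO_rpow_mul_exp ?_ (pow_mul_besselEsymm_isBigO n k)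
  have : (1 : ℝ) ≤ n := Nat.one_le_cast.2 (Nat.one_le_iff_ne_zero.2 hn)
  linarith

lemma tendsto_sumRulePrimitive_besselEsymm_atTop :
    Tendsto (sumRulePrimitive besselEsymm) atTop (𝓝 0) :=
  tendsto_sumRulePrimitive
    (tendsto_atTop_zero_of_isBigO_rpow_mul_exp (by norm_num) besselEsymm_six_isBigO)
    fun n _ k => tendsto_atTop_zero_of_isBigO_rpow_mul_exp (by norm_num)
      (pow_mul_besselEsymm_isBigO n k)

lemma hasDerivAt_sumRulePrimitive_besselEsymm {t : ℝ} (ht : 0 < t) :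
    HasDerivAt (sumRulePrimitive besselEsymm)
      (-2 * (I0 t * (K0 t) ^ 5 * t * (2 - 85 * t ^ 2 + 72 * t ^ 4))) t := by
  rw [← prod_besselFactor]
  exact hasDerivAt_sumRulePrimitive (by simp) ht.ne' (fun i _ => hasDerivAt_besselFactor ht i)
    fun i _ => hasDerivAt_eulerBesselFactor ht i

lemma integrableOn_pow_mul_I0_mul_K0_pow (n : ℕ) :
    IntegrableOn (fun t => t ^ n * (I0 t * K0 t ^ 5)) (Ioi 0) := by
  have hcont : ContinuousOn (fun t => t ^ n * besselEsymm 0 t) (Ioi 0) := fun t ht =>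
    ((continuous_pow n).continuousAt.mul (hasDerivAt_mixedEsymm_zero fun i _ =>
      hasDerivAt_besselFactor ht i).continuousAt).continuousWithinAt
  simpa only [besselEsymm_zero] using integrableOn_Ioi_of_isBigO_rpow_mul_exp
    (by linarith [n.cast_nonneg (α := ℝ)]) (by norm_num) hcont (pow_mul_besselEsymm_isBigO n 0)

lemma integrableOn_I0_mul_K0_pow_mul_sum_rule_weight :
    IntegrableOn (fun t => I0 t * (K0 t) ^ 5 * t * (2 - 85 * t ^ 2 + 72 * t ^ 4)) (Ioi 0) := by
  have hmoment (n : ℕ) (c : ℝ) := (integrableOn_pow_mul_I0_mul_K0_pow n).const_mul c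
  have h := ((hmoment 1 2).sub (hmoment 3 85)).add (hmoment 5 72)
  refine IntegrableOn.congr_fun h (fun t _ => ?_) measurableSet_Ioi
  simp only [Pi.add_apply, Pi.sub_apply]
  ring

end Product

theorem sum_rule_IKM15 :
    (∫ t in Ioi (0:ℝ), I0 t * (K0 t)^5 * t * (2 - 85*t^2 + 72*t^4)) = 0 := by
  have h := integral_Ioi_of_hasDerivAt_of_tendsto_nhdsGT
    (fun t ht => hasDerivAt_sumRulePrimitive_besselEsymm ht)
    (integrableOn_I0_mul_K0_pow_mul_sum_rule_weight.const_mul (-2))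
    tendsto_sumRulePrimitive_besselEsymm_nhdsGT_zero tendsto_sumRulePrimitive_besselEsymm_atTop
  rw [integral_const_mul] at h
  linarith
end
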